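/- For every fixed integer r ≥ 2 there exists a constant c = c(r) > 0 such that the proportion of ordered r-matchings M of size n (among all (rn)!/((r!)^n · n!) ordered r-matchings on [rn]) that contain a pair of twins of size at least c · n^{2/(r+1)} tends to 1 as n → ∞. Equivalently, a uniformly random ordered r-matching of size n asymptotically almost surely satisfies t(M) ≥ c · n^{2/(r+1)}. -/

import Mathlib

/-- A (sub-)matching: a finite set of pairwise disjoint `r`-element subsets
("edges") of the linearly ordered vertex set `ℕ`. -/
def IsMatching (r : ℕ) (M : Finset (Finset ℕ)) : Prop :=
  (∀ e ∈ M, e.card = r) ∧ ∀ e ∈ M, ∀ f ∈ M, e ≠ f → Disjoint e f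

/-- The vertex support of a matching: the union of its edges. -/
def mSupport (M : Finset (Finset ℕ)) : Finset ℕ := M.sup id

/-- An ordered `r`-matching of size `n`: `n` pairwise disjoint `r`-element edges
partitioning `[rn] = {1, …, rn}`. -/
def IsOrderedMatching (r n : ℕ) (M : Finset (Finset ℕ)) : Prop :=
  IsMatching r M ∧ M.card = n ∧ mSupport M = Finset.Icc 1 (r * n)

/-- Two ordered matchings are isomorphic if some (equivalently, the unique)
order-preserving bijection between their vertex supports maps edges onto edges. -/
def MatchIso (M N : Finset (Finset ℕ)) : Prop :=
  ∃ f : ℕ → ℕ, Set.BijOn f (mSupport M : Set ℕ) (mSupport N : Set ℕ) ∧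
    (∀ x ∈ mSupport M, ∀ y ∈ mSupport M, x < y → f x < f y) ∧
    N = M.image fun e => e.image f

/-- `M` contains twins of size `k`: a pair of vertex-disjoint isomorphic
sub-matchings of `M`, each with `k` edges. -/
def HasTwins (M : Finset (Finset ℕ)) (k : ℕ) : Prop :=
  ∃ M₁ M₂ : Finset (Finset ℕ), M₁ ⊆ M ∧ M₂ ⊆ M ∧
    Disjoint (mSupport M₁) (mSupport M₂) ∧ MatchIso M₁ M₂ ∧
    M₁.card = k ∧ M₂.card = k

/-- `t(M)`: the maximum size of twins in `M`. -/
noncomputable def twinMax (M : Finset (Finset ℕ)) : ℕ := sSup {k | HasTwins M k}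

/-- `t^(r)(n)`: the minimum of `t(M)` over all ordered `r`-matchings of size `n`. -/
noncomputable def minTwins (r n : ℕ) : ℕ :=
  sInf {t | ∃ M, IsOrderedMatching r n M ∧ twinMax M = t}

/-- A permutation `π` of `[n]` has twins of length `k`: two order-isomorphic
subsequences occupying disjoint sets of positions. -/
def PermTwins {n : ℕ} (π : Equiv.Perm (Fin n)) (k : ℕ) : Prop :=
  ∃ a b : Fin k → Fin n, StrictMono a ∧ StrictMono b ∧
    (∀ i j, a i ≠ b j) ∧ ∀ i j, (π (a i) < π (a j) ↔ π (b i) < π (b j))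

/-- `τ(n)`: the largest `k` such that every permutation of `[n]` has twins of length `k`. -/
noncomputable def permTau (n : ℕ) : ℕ :=
  sSup {k | ∀ π : Equiv.Perm (Fin n), PermTwins π k}

/-- An `r`-pattern, represented by its canonical representative: an ordered
`r`-matching of size `2` (on the vertex set `[2r]`). Every isomorphism class of
ordered `r`-matchings of size `2` contains exactly one such representative. -/
def IsPattern (r : ℕ) (P : Finset (Finset ℕ)) : Prop := IsOrderedMatching r 2 P

/-- A `P`-clique: a matching all of whose pairs of (distinct) edges form the pattern `P`. -/
def IsPClique (P M : Finset (Finset ℕ)) : Prop :=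
  ∀ e ∈ M, ∀ f ∈ M, e ≠ f → MatchIso {e, f} P

/-- `L(M)`: the size of the largest sub-matching of `M` that is a `P`-clique,
over all `r`-patterns `P`. -/
noncomputable def cliqueMax (r : ℕ) (M : Finset (Finset ℕ)) : ℕ :=
  sSup {k | ∃ P, IsPattern r P ∧ ∃ M' ⊆ M, IsPClique P M' ∧ M'.card = k}

/-- `L_r(n)`: the minimum of `L(M)` over all ordered `r`-matchings of size `n`. -/
noncomputable def minClique (r n : ℕ) : ℕ :=
  sInf {l | ∃ M, IsOrderedMatching r n M ∧ cliqueMax r M = l}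

/-!
Colour the vertices `1, …, r * n` by consecutive blocks of about `n ^ ((r - 1) / (r + 1))` vertices
each. If two edges meet the same `r` distinct blocks, and if the blocks met by different such pairs
of edges are different, then the first edges and the second edges of these pairs form twins, as
the order of their vertices can be read off from the blocks. Two given edges form such a pair with
probability of order `n ^ (-2 * r / (r + 1))`, so there are about `n ^ (2 / (r + 1))` pairs in the
mean; pairs sharing a block are rarer, and deleting them leaves a family of pairs of the same order
in the mean.

The maximum size of such a family drops by at most two under a transposition of the permutation
encoding the matching, and only by the number of its pairs that are affected. By the Poincaré
inequality for random transpositions its variance is therefore at most a constant multiple of its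
mean, and Chebyshev's inequality shows that it is rarely less than half of its mean.
-/

open Finset Equiv
open scoped BigOperators

section FiniteProbability

variable {α β ι : Type*} [Fintype α] [Fintype β]

open Classical in
/-- The probability that a uniformly random element of a finite type has the property `P`; it is
`0` on an empty type. -/
noncomputable def uniformProb (P : α → Prop) : ℝ := 𝔼 a, if P a then 1 else 0

/-- The variance of a real function of a uniformly random element of a finite type. -/
noncomputable def uniformVariance (f : α → ℝ) : ℝ := (𝔼 a, f a ^ 2) - (𝔼 a, f a) ^ 2

theorem uniformProb_nonneg (P : α → Prop) : 0 ≤ uniformProb P :=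
  expect_nonneg fun a _ ↦ by split_ifs <;> norm_num

theorem uniformProb_mono {P Q : α → Prop} (h : ∀ a, P a → Q a) :
    uniformProb P ≤ uniformProb Q :=
  expect_le_expect fun a _ ↦ by
    by_cases hP : P a
    · simp [hP, h a hP]
    · rw [if_neg hP]; split_ifs <;> norm_num

theorem uniformProb_congr {P Q : α → Prop} (h : ∀ a, P a ↔ Q a) :
    uniformProb P = uniformProb Q :=
  congrArg uniformProb (funext fun a ↦ propext (h a))

theorem uniformProb_of_forall [Nonempty α] {P : α → Prop} (h : ∀ a, P a) : uniformProb P = 1 := by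
  simp [uniformProb, h]

theorem uniformProb_le_one (P : α → Prop) : uniformProb P ≤ 1 := by
  cases isEmpty_or_nonempty α
  · simp [uniformProb]
  · exact (uniformProb_mono fun _ _ ↦ trivial).trans_eq (uniformProb_of_forall fun _ ↦ trivial)

theorem uniformProb_comp_equiv (e : α ≃ β) (P : β → Prop) :
    uniformProb (fun a ↦ P (e a)) = uniformProb P :=
  Fintype.expect_equiv e _ _ fun _ ↦ rfl

theorem uniformProb_and_add_uniformProb_and_not (P Q : α → Prop) :
    uniformProb (fun a ↦ P a ∧ Q a) + uniformProb (fun a ↦ P a ∧ ¬ Q a) = uniformProb P := by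
  simp only [uniformProb, ← expect_add_distrib]
  exact expect_congr rfl fun a _ ↦ by by_cases hP : P a <;> by_cases hQ : Q a <;> simp [hP, hQ]

theorem expect_card_filter (s : Finset ι) (R : ι → α → Prop) [∀ i, DecidablePred (R i)] :
    𝔼 a, (#{i ∈ s | R i a} : ℝ) = ∑ i ∈ s, uniformProb (R i) := by
  simp only [uniformProb, ← expect_sum_comm, ← sum_boole]
  congr! 4

theorem uniformProb_exists_le_sum (s : Finset ι) (R : ι → α → Prop) :
    uniformProb (fun a ↦ ∃ i ∈ s, R i a) ≤ ∑ i ∈ s, uniformProb (R i) := by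
  classical
  rw [← expect_card_filter]
  refine expect_le_expect fun a _ ↦ ?_
  split_ifs with h
  · obtain ⟨i, hi, hR⟩ := h
    exact_mod_cast card_pos.2 ⟨i, mem_filter.2 ⟨hi, hR⟩⟩
  · positivity

theorem expect_sub_const_sq [Nonempty α] (f : α → ℝ) (c : ℝ) :
    𝔼 a, (f a - c) ^ 2 = uniformVariance f + ((𝔼 a, f a) - c) ^ 2 := by
  have expand : ∀ a, (f a - c) ^ 2 = f a ^ 2 - 2 * c * f a + c ^ 2 := fun a ↦ by ring
  simp only [expand, expect_add_distrib, expect_sub_distrib, ← mul_expect, Fintype.expect_const,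
    uniformVariance]
  ring

theorem uniformVariance_nonneg (f : α → ℝ) : 0 ≤ uniformVariance f := by
  cases isEmpty_or_nonempty α
  · simp [uniformVariance]
  · have h := expect_sub_const_sq f (𝔼 a, f a)
    rw [sub_self, zero_pow two_ne_zero, add_zero] at h
    exact h ▸ expect_nonneg fun a _ ↦ sq_nonneg _

theorem sq_expect_le_expect_sq (f : α → ℝ) : (𝔼 a, f a) ^ 2 ≤ 𝔼 a, f a ^ 2 :=
  sub_nonneg.1 (uniformVariance_nonneg f)

theorem expect_expect_sub_sq [Nonempty α] (f : α → ℝ) :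
    𝔼 b, 𝔼 a, (f a - f b) ^ 2 = 2 * uniformVariance f := by
  have hvar := expect_sub_const_sq f (𝔼 a, f a)
  simp only [expect_sub_const_sq, expect_add_distrib, Fintype.expect_const]
  simp only [sub_self, zero_pow two_ne_zero, add_zero] at hvar
  rw [← hvar, two_mul]
  simp only [sub_sq_comm]

/-- The law of total variance. -/
theorem uniformVariance_prod (f : α × β → ℝ) :
    uniformVariance f = (𝔼 a, uniformVariance fun b ↦ f (a, b)) +
      uniformVariance fun a ↦ 𝔼 b, f (a, b) := by
  simp only [uniformVariance, expect_sub_distrib, ← univ_product_univ, expect_product]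
  ring

theorem uniformVariance_comp_equiv (e : α ≃ β) (f : β → ℝ) :
    uniformVariance (fun a ↦ f (e a)) = uniformVariance f := by
  simp only [uniformVariance, Fintype.expect_equiv e (fun a ↦ f (e a)) f fun _ ↦ rfl,
    Fintype.expect_equiv e (fun a ↦ f (e a) ^ 2) (f · ^ 2) fun _ ↦ rfl]

/-- Chebyshev's inequality for a function whose variance is at most proportional to its mean. -/
theorem uniformProb_lt_half_le {f : α → ℝ} {μ V : ℝ} (hμ : 0 < μ) (hV : 0 ≤ V)
    (hf : μ ≤ 𝔼 a, f a) (hvar : uniformVariance f ≤ V * 𝔼 a, f a) :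
    uniformProb (fun a ↦ f a < μ / 2) ≤ 4 * V / μ := by
  have : Nonempty α := by
    by_contra h
    have := not_nonempty_iff.1 h
    simp only [univ_eq_empty, expect_empty] at hf
    linarith
  set m := 𝔼 a, f a
  have hm : 0 < m := hμ.trans_le hf
  have markov : uniformProb (fun a ↦ f a < μ / 2) * (m / 2) ^ 2 ≤ 𝔼 a, (f a - m) ^ 2 := by
    rw [uniformProb, expect_mul]
    refine expect_le_expect fun a _ ↦ ?_
    split_ifs with h
    · nlinarith
    · nlinarith [sq_nonneg (f a - m)]
  rw [expect_sub_const_sq, sub_self, zero_pow two_ne_zero, add_zero] at markov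
  calc uniformProb (fun a ↦ f a < μ / 2) ≤ 4 * V / m := by
        rw [le_div_iff₀ hm]
        nlinarith
    _ ≤ 4 * V / μ := by gcongr

end FiniteProbability

section PermutationPoincare

variable {α : Type*} [Fintype α] [DecidableEq α]

/-- The mean square change of `f` when the values of a uniformly random permutation at `a` and `b`
are exchanged. -/
noncomputable def swapEnergy (f : Perm α → ℝ) (a b : α) : ℝ :=
  𝔼 σ, (f σ - f (σ * swap a b)) ^ 2

theorem swapEnergy_self (f : Perm α → ℝ) (a : α) : swapEnergy f a a = 0 := by
  simp [swapEnergy, swap_self, ← Perm.one_def]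

theorem swapEnergy_comm (f : Perm α → ℝ) (a b : α) : swapEnergy f a b = swapEnergy f b a := by
  rw [swapEnergy, swap_comm, swapEnergy]

theorem swapEnergy_nonneg (f : Perm α → ℝ) (a b : α) : 0 ≤ swapEnergy f a b :=
  expect_nonneg fun _ _ ↦ sq_nonneg _

theorem swapEnergy_mul_right (f : Perm α → ℝ) (π : Perm α) (a b : α) :
    swapEnergy (fun σ ↦ f (σ * π)) (π a) (π b) = swapEnergy f a b := by
  refine Fintype.expect_equiv (Equiv.mulRight π) _ _ fun σ ↦ ?_
  simp only [coe_mulRight, mul_assoc, mul_swap_eq_swap_mul π]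

theorem swapEnergy_some_some (f : Perm (Option α) → ℝ) (a b : α) :
    swapEnergy f (some a) (some b) =
      𝔼 p, swapEnergy (fun e ↦ f (Perm.decomposeOption.symm (p, e))) a b := by
  have hmul : ∀ p e, Perm.decomposeOption.symm (p, e * swap a b) =
      Perm.decomposeOption.symm (p, e) * swap (some a) (some b) := fun p e ↦ by
    simp [← optionCongr_swap, Perm.mul_def, Equiv.trans_assoc]
  simp only [swapEnergy, hmul]
  rw [← expect_product' univ univ fun p e ↦ (f (Perm.decomposeOption.symm (p, e)) -
    f (Perm.decomposeOption.symm (p, e) * swap (some a) (some b))) ^ 2, univ_product_univ]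
  exact Fintype.expect_equiv Perm.decomposeOption _ _ fun σ ↦ by simp

/-- Composing with `swap p q` carries the permutations sending `none` to `p` bijectively onto those
sending `none` to `q`. -/
theorem expect_swap_mul_decomposeOption_symm (f : Perm (Option α) → ℝ) (p q : Option α) :
    𝔼 e, f (swap p q * Perm.decomposeOption.symm (p, e)) =
      𝔼 e, f (Perm.decomposeOption.symm (q, e)) := by
  have hfst : ∀ e, (Perm.decomposeOption (swap p q * Perm.decomposeOption.symm (p, e))).1 = q := by
    simp
  let φ (e : Perm α) := (Perm.decomposeOption (swap p q * Perm.decomposeOption.symm (p, e))).2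
  have hφ : ∀ e, Perm.decomposeOption.symm (q, φ e) =
      swap p q * Perm.decomposeOption.symm (p, e) := fun e ↦ by
    rw [symm_apply_eq]
    exact Prod.ext (hfst e).symm rfl
  have hinj : Function.Injective φ := fun e e' h ↦ by
    have hsymm : swap p q * Perm.decomposeOption.symm (p, e) =
        swap p q * Perm.decomposeOption.symm (p, e') := by rw [← hφ, ← hφ, h]
    exact optionCongr_injective (by simpa using hsymm)
  exact Fintype.expect_bijective φ (Finite.injective_iff_bijective.1 hinj) _ _ fun e ↦ by rw [hφ]

theorem uniformVariance_expect_decomposeOption_symm_le (f : Perm (Option α) → ℝ) :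
    uniformVariance (fun p ↦ 𝔼 e, f (Perm.decomposeOption.symm (p, e))) ≤
      (∑ j, swapEnergy f none j) / (2 * (Fintype.card α + 1)) := by
  have jensen : ∀ p q, ((𝔼 e, f (Perm.decomposeOption.symm (p, e))) -
      𝔼 e, f (Perm.decomposeOption.symm (q, e))) ^ 2 ≤
      𝔼 e, (f (Perm.decomposeOption.symm (p, e)) -
        f (swap p q * Perm.decomposeOption.symm (p, e))) ^ 2 := fun p q ↦ by
    rw [← expect_swap_mul_decomposeOption_symm f p q, ← expect_sub_distrib]
    exact sq_expect_le_expect_sq _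
  have fibres : ∀ q, 𝔼 p, 𝔼 e, (f (Perm.decomposeOption.symm (p, e)) -
      f (swap p q * Perm.decomposeOption.symm (p, e))) ^ 2 =
      𝔼 σ : Perm (Option α), (f σ - f (swap (σ none) q * σ)) ^ 2 := fun q ↦ by
    rw [← expect_product' univ univ fun p e ↦ (f (Perm.decomposeOption.symm (p, e)) -
      f (swap p q * Perm.decomposeOption.symm (p, e))) ^ 2, univ_product_univ]
    exact (Fintype.expect_equiv Perm.decomposeOption _ _ fun σ ↦ by simp).symm
  have positions : ∀ σ : Perm (Option α), 𝔼 q, (f σ - f (swap (σ none) q * σ)) ^ 2 =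
      𝔼 j, (f σ - f (σ * swap none j)) ^ 2 := fun σ ↦
    (Fintype.expect_equiv σ _ _ fun j ↦ by rw [mul_swap_eq_swap_mul]).symm
  have key : 2 * uniformVariance (fun p ↦ 𝔼 e, f (Perm.decomposeOption.symm (p, e))) ≤
      𝔼 j, swapEnergy f none j := by
    rw [← expect_expect_sub_sq]
    refine (expect_le_expect fun q _ ↦ expect_le_expect fun p _ ↦ jensen p q).trans_eq ?_
    simp only [fibres]
    rw [expect_comm]
    simp only [positions]
    exact expect_comm ..
  rw [Fintype.expect_eq_sum_div_card, Fintype.card_option] at key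
  push_cast at key
  rw [mul_comm 2, ← div_div]
  linarith

theorem uniformVariance_le_swapEnergy_option (f : Perm (Option α) → ℝ)
    (ih : ∀ g : Perm α → ℝ,
      uniformVariance g ≤ (∑ a, ∑ b, swapEnergy g a b) / (2 * Fintype.card α)) :
    uniformVariance f ≤
      (∑ a : α, ∑ b : α, swapEnergy f (some a) (some b)) / (2 * Fintype.card α) +
        (∑ j, swapEnergy f none j) / (2 * (Fintype.card α + 1)) := by
  rw [← uniformVariance_comp_equiv Perm.decomposeOption.symm, uniformVariance_prod]
  refine add_le_add ?_ (uniformVariance_expect_decomposeOption_symm_le f)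
  refine (expect_le_expect fun p _ ↦ ih _).trans_eq ?_
  simp only [swapEnergy_some_some, ← expect_div, expect_sum_comm]

theorem sum_swapEnergy_some_some (f : Perm (Option α) → ℝ) :
    ∑ a : α, ∑ b : α, swapEnergy f (some a) (some b) =
      (∑ i, ∑ j, swapEnergy f i j) - 2 * ∑ j, swapEnergy f none j := by
  simp only [Fintype.sum_option, sum_add_distrib, swapEnergy_self, swapEnergy_comm f _ none]
  ring

theorem uniformVariance_le_sub_swapEnergy_option (f : Perm (Option α) → ℝ)
    (ih : ∀ g : Perm α → ℝ,
      uniformVariance g ≤ (∑ a, ∑ b, swapEnergy g a b) / (2 * Fintype.card α))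
    (k : Option α) :
    uniformVariance f ≤
      ((∑ i, ∑ j, swapEnergy f i j) - 2 * ∑ j, swapEnergy f k j) / (2 * Fintype.card α) +
        (∑ j, swapEnergy f k j) / (2 * (Fintype.card α + 1)) := by
  let π := swap none k
  let g : Perm (Option α) → ℝ := fun σ ↦ f (σ * π)
  have hrow : ∀ i, ∑ j, swapEnergy g (π i) j = ∑ j, swapEnergy f i j := fun i ↦ by
    rw [← Equiv.sum_comp π]
    exact sum_congr rfl fun j _ ↦ swapEnergy_mul_right f π i j
  have hnone : ∑ j, swapEnergy g none j = ∑ j, swapEnergy f k j := by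
    simpa [π] using hrow k
  have htotal : ∑ i, ∑ j, swapEnergy g i j = ∑ i, ∑ j, swapEnergy f i j := by
    rw [← Equiv.sum_comp π]
    exact sum_congr rfl fun i _ ↦ hrow i
  have hg := uniformVariance_le_swapEnergy_option g ih
  rw [sum_swapEnergy_some_some, hnone, htotal] at hg
  rwa [← uniformVariance_comp_equiv (Equiv.mulRight π) f]

theorem uniformVariance_le_sum_swapEnergy_option (f : Perm (Option α) → ℝ)
    (ih : ∀ g : Perm α → ℝ,
      uniformVariance g ≤ (∑ a, ∑ b, swapEnergy g a b) / (2 * Fintype.card α)) :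
    uniformVariance f ≤ (∑ i, ∑ j, swapEnergy f i j) / (2 * Fintype.card (Option α)) := by
  set S := ∑ i, ∑ j, swapEnergy f i j
  have hS : 0 ≤ S := sum_nonneg fun i _ ↦ sum_nonneg fun j _ ↦ swapEnergy_nonneg f i j
  set N : ℝ := (Fintype.card α : ℝ)
  have hN : 0 ≤ N := Nat.cast_nonneg _
  have hsum : (N + 1) * uniformVariance f ≤
      ((N + 1) * S - 2 * S) / (2 * N) + S / (2 * (N + 1)) := by
    have h := sum_le_sum fun k (_ : k ∈ univ) ↦ uniformVariance_le_sub_swapEnergy_option f ih k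
    simpa only [sum_add_distrib, ← sum_div, sum_sub_distrib, ← mul_sum, sum_const, card_univ,
      Fintype.card_option, nsmul_eq_mul, Nat.cast_add, Nat.cast_one] using h
  have hcoeff : ((N + 1) * S - 2 * S) / (2 * N) + S / (2 * (N + 1)) ≤ S / 2 := by
    rcases hN.eq_or_lt with h0 | hpos
    · simp [← h0]
    · rw [div_add_div _ _ (by positivity) (by positivity), div_le_div_iff₀ (by positivity) two_pos]
      nlinarith
  rw [Fintype.card_option, Nat.cast_add, Nat.cast_one, le_div_iff₀ (by positivity)]
  linarith

theorem uniformVariance_le_sum_swapEnergy_of_equiv {β : Type*} [Fintype β] [DecidableEq β]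
    (e : α ≃ β) (f : Perm β → ℝ)
    (h : ∀ g : Perm α → ℝ,
      uniformVariance g ≤ (∑ a, ∑ b, swapEnergy g a b) / (2 * Fintype.card α)) :
    uniformVariance f ≤ (∑ a, ∑ b, swapEnergy f a b) / (2 * Fintype.card β) := by
  have henergy : ∀ a b, swapEnergy (fun σ ↦ f (e.permCongr σ)) a b = swapEnergy f (e a) (e b) :=
    fun a b ↦ Fintype.expect_equiv e.permCongr _ _ fun σ ↦ by
      rw [← symm_trans_swap_trans a b e]
      exact congrArg (fun π ↦ (f (e.permCongr σ) - f π) ^ 2) (permCongr_mul e σ (swap a b))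
  have hg := h fun σ ↦ f (e.permCongr σ)
  simp only [henergy, uniformVariance_comp_equiv e.permCongr f] at hg
  rw [← Fintype.card_congr e, ← Equiv.sum_comp e]
  simpa only [Equiv.sum_comp e] using hg

/-- The Poincaré inequality for the random transposition walk on permutations. -/
theorem uniformVariance_le_sum_swapEnergy (f : Perm α → ℝ) :
    uniformVariance f ≤ (∑ a, ∑ b, swapEnergy f a b) / (2 * Fintype.card α) := by
  refine Fintype.induction_empty_option (P := fun β _ ↦ ∀ [DecidableEq β] (g : Perm β → ℝ),
    uniformVariance g ≤ (∑ a, ∑ b, swapEnergy g a b) / (2 * Fintype.card β)) ?_ ?_ ?_ α f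
  · intro β γ _ e ih _ g
    classical
    let := Fintype.ofEquiv γ e.symm
    exact uniformVariance_le_sum_swapEnergy_of_equiv e g ih
  · intro _ g
    simp [uniformVariance]
  · intro β _ ih _ g
    classical
    convert uniformVariance_le_sum_swapEnergy_option g ih

theorem swapEnergy_le_of_sub_le {f : Perm α → ℝ} {t : Perm α → α → ℝ}
    (ht0 : ∀ σ p, 0 ≤ t σ p) (ht1 : ∀ σ p, t σ p ≤ 1)
    (hf : ∀ σ p q, f σ - f (σ * swap p q) ≤ t σ p + t σ q) (p q : α) :
    swapEnergy f p q ≤ 4 * ((𝔼 σ, t σ p) + 𝔼 σ, t σ q) := by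
  have hsq : ∀ σ, (f σ - f (σ * swap p q)) ^ 2 ≤
      2 * (t σ p + t σ q) + 2 * (t (σ * swap p q) p + t (σ * swap p q) q) := fun σ ↦ by
    have hlower := hf (σ * swap p q) p q
    rw [mul_assoc, swap_mul_self, mul_one] at hlower
    have hupper := hf σ p q
    rcases le_total 0 (f σ - f (σ * swap p q)) with h | h <;>
      nlinarith [ht0 σ p, ht0 σ q, ht0 (σ * swap p q) p, ht0 (σ * swap p q) q, ht1 σ p, ht1 σ q,
        ht1 (σ * swap p q) p, ht1 (σ * swap p q) q]
  have hshift : ∀ a, 𝔼 σ, t (σ * swap p q) a = 𝔼 σ, t σ a := fun a ↦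
    Fintype.expect_equiv (Equiv.mulRight (swap p q)) _ _ fun _ ↦ rfl
  refine (expect_le_expect fun σ _ ↦ hsq σ).trans_eq ?_
  simp only [expect_add_distrib, ← mul_expect, hshift]
  ring

/-- The Efron–Stein inequality for self-bounding functions of a random permutation. -/
theorem uniformVariance_le_of_sub_le {f : Perm α → ℝ} {t : Perm α → α → ℝ}
    (ht0 : ∀ σ p, 0 ≤ t σ p) (ht1 : ∀ σ p, t σ p ≤ 1)
    (hf : ∀ σ p q, f σ - f (σ * swap p q) ≤ t σ p + t σ q) :
    uniformVariance f ≤ 4 * 𝔼 σ, ∑ p, t σ p := by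
  refine (uniformVariance_le_sum_swapEnergy f).trans ?_
  set T := 𝔼 σ, ∑ p, t σ p with hT
  have hsum : ∑ p, ∑ q, swapEnergy f p q ≤ 8 * Fintype.card α * T :=
    calc ∑ p, ∑ q, swapEnergy f p q
      _ ≤ ∑ p, ∑ q, 4 * ((𝔼 σ, t σ p) + 𝔼 σ, t σ q) :=
        sum_le_sum fun p _ ↦ sum_le_sum fun q _ ↦ swapEnergy_le_of_sub_le ht0 ht1 hf p q
      _ = 8 * Fintype.card α * T := by
        simp only [← mul_sum, sum_add_distrib, sum_const, card_univ, nsmul_eq_mul, hT,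
          expect_sum_comm]
        ring
  have hT0 : 0 ≤ T := expect_nonneg fun σ _ ↦ sum_nonneg fun p _ ↦ ht0 σ p
  exact div_le_of_le_mul₀ (by positivity) (by positivity) (by linarith)

end PermutationPoincare

section ColourCoincidences

variable {α β : Type*}

/-- The event `E` depends only on the values of the permutation on `T`. -/
def IsDeterminedOn (E : Perm α → Prop) (T : Finset α) : Prop :=
  ∀ ⦃σ τ : Perm α⦄, Set.EqOn σ τ T → E σ → E τ

theorem card_filter_colour_apply_eq [Fintype α] [DecidableEq β] (κ : α → β) (σ : Perm α) (c : β) :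
    #{y | κ (σ y) = c} = #{x | κ x = c} :=
  card_equiv σ fun y ↦ by simp

variable [DecidableEq α] {E : Perm α → Prop} {S T : Finset α} {κ : α → β} {ρ : α → α} {p p' : α}

theorem IsDeterminedOn.mul_swap_iff (hE : IsDeterminedOn E T) (hp : p ∉ T) (hp' : p' ∉ T)
    (σ : Perm α) : E (σ * swap p p') ↔ E σ := by
  have hfix : Set.EqOn (σ * swap p p') σ T := fun x hx ↦ by
    rw [Perm.mul_apply, swap_apply_of_ne_of_ne (ne_of_mem_of_not_mem hx hp)
      (ne_of_mem_of_not_mem hx hp')]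
  exact ⟨fun h ↦ hE hfix h, fun h ↦ hE hfix.symm h⟩

theorem IsDeterminedOn.and_forall (hE : IsDeterminedOn E T) (hρ : ∀ s ∈ S, ρ s ∈ T) :
    IsDeterminedOn (fun σ ↦ E σ ∧ ∀ s ∈ S, κ (σ s) = κ (σ (ρ s))) (T ∪ S) := by
  rintro σ τ hστ ⟨hEσ, hσ⟩
  refine ⟨hE (hστ.mono (mod_cast subset_union_left)) hEσ, fun s hs ↦ ?_⟩
  rw [← hστ (mod_cast mem_union_right T hs), ← hστ (mod_cast mem_union_left S (hρ s hs))]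
  exact hσ s hs

variable [Fintype α] [DecidableEq β] {q : ℝ}

open Classical in
/-- Every position outside `T` is equally likely to receive the colour of `p'`. -/
theorem IsDeterminedOn.expect_card_filter_colour_eq (hE : IsDeterminedOn E T) (hp : p ∉ T)
    (hp' : p' ∈ T) :
    𝔼 σ : Perm α, (#{y ∈ Tᶜ | E σ ∧ κ (σ y) = κ (σ p')} : ℝ) =
      #Tᶜ * uniformProb fun σ : Perm α ↦ E σ ∧ κ (σ p) = κ (σ p') := by
  rw [expect_card_filter, ← nsmul_eq_mul, ← sum_const]
  refine sum_congr rfl fun y hy ↦ ?_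
  rw [mem_compl] at hy
  rw [← uniformProb_comp_equiv (Equiv.mulRight (swap p y))]
  refine uniformProb_congr fun σ ↦ ?_
  have hpp : swap p y p' = p' :=
    swap_apply_of_ne_of_ne (ne_of_mem_of_not_mem hp' hp) (ne_of_mem_of_not_mem hp' hy)
  simp only [coe_mulRight, hE.mul_swap_iff hp hy, Perm.mul_apply, swap_apply_right, hpp]

open Classical in
theorem IsDeterminedOn.uniformProb_and_colour_eq_le (hE : IsDeterminedOn E T) (hp : p ∉ T)
    (hp' : p' ∈ T) (hT : 2 * #T ≤ Fintype.card α)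
    (hκ : ∀ c, 2 * (#{x | κ x = c} : ℝ) ≤ q * Fintype.card α) :
    (uniformProb fun σ : Perm α ↦ E σ ∧ κ (σ p) = κ (σ p')) ≤ q * uniformProb E := by
  set N := Fintype.card α
  have hN : (0 : ℝ) < N := mod_cast Fintype.card_pos_iff.2 ⟨p⟩
  have hcount : 𝔼 σ : Perm α, (#{y ∈ Tᶜ | E σ ∧ κ (σ y) = κ (σ p')} : ℝ) ≤
      q * N / 2 * uniformProb E := by
    rw [uniformProb, mul_expect]
    refine expect_le_expect fun σ _ ↦ ?_
    by_cases hσ : E σ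
    · have hle : (#{y ∈ Tᶜ | κ (σ y) = κ (σ p')} : ℝ) ≤ #{x | κ x = κ (σ p')} := by
        rw [← card_filter_colour_apply_eq κ σ]
        exact_mod_cast card_le_card (filter_subset_filter _ (subset_univ _))
      simp only [hσ, true_and, if_true]
      linarith [hκ (κ (σ p'))]
    · simp [hσ]
  rw [hE.expect_card_filter_colour_eq hp hp'] at hcount
  have hhalf : (N : ℝ) / 2 ≤ #Tᶜ := by
    have : N ≤ 2 * #Tᶜ := by rw [card_compl]; omega
    rify at this
    linarith
  have hmul := (mul_le_mul_of_nonneg_right hhalf (uniformProb_nonneg _)).trans hcount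
  exact le_of_mul_le_mul_left (by linarith) (half_pos hN)

theorem IsDeterminedOn.uniformProb_and_forall_colour_eq_le (hE : IsDeterminedOn E T)
    (hρ : ∀ s ∈ S, ρ s ∈ T) (hST : Disjoint S T) (hcard : 2 * (#T + #S) ≤ Fintype.card α)
    (hκ : ∀ c, 2 * (#{x | κ x = c} : ℝ) ≤ q * Fintype.card α) (hq : 0 ≤ q) :
    (uniformProb fun σ : Perm α ↦ E σ ∧ ∀ s ∈ S, κ (σ s) = κ (σ (ρ s))) ≤
      q ^ #S * uniformProb E := by
  induction S using Finset.induction_on with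
  | empty => simp
  | insert p S hpS ih =>
    rw [card_insert_of_notMem hpS] at hcard ⊢
    rw [disjoint_insert_left] at hST
    simp only [forall_mem_insert] at hρ ⊢
    have hstep := (hE.and_forall (κ := κ) hρ.2).uniformProb_and_colour_eq_le (p := p)
      (by simp [hST.1, hpS]) (mem_union_left S hρ.1) (by have := card_union_le T S; omega) hκ
    calc uniformProb (fun σ : Perm α ↦
          E σ ∧ κ (σ p) = κ (σ (ρ p)) ∧ ∀ s ∈ S, κ (σ s) = κ (σ (ρ s)))
      _ ≤ q * uniformProb (fun σ : Perm α ↦ E σ ∧ ∀ s ∈ S, κ (σ s) = κ (σ (ρ s))) :=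
        (uniformProb_congr fun σ ↦ by tauto).trans_le hstep
      _ ≤ q * (q ^ #S * uniformProb E) := by
        gcongr
        exact ih hρ.2 hST.2 (by omega)
      _ = q ^ (#S + 1) * uniformProb E := by ring

open Classical in
/-- If exactly one position of `T` has the colour of `p'`, then all but one of the points of this
colour lie at positions outside `T`. -/
theorem IsDeterminedOn.le_uniformProb_and_colour_eq (hE : IsDeterminedOn E T) (hp : p ∉ T)
    (hp' : p' ∈ T) (huniq : ∀ σ, E σ → ∀ y ∈ T, κ (σ y) = κ (σ p') → y = p')
    (hκ : ∀ x, q * Fintype.card α + 1 ≤ #{y | κ y = κ x}) :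
    q * uniformProb E ≤ uniformProb fun σ : Perm α ↦ E σ ∧ κ (σ p) = κ (σ p') := by
  set N := Fintype.card α
  have hN : (0 : ℝ) < N := mod_cast Fintype.card_pos_iff.2 ⟨p⟩
  have hcount : q * N * uniformProb E ≤
      𝔼 σ : Perm α, (#{y ∈ Tᶜ | E σ ∧ κ (σ y) = κ (σ p')} : ℝ) := by
    rw [uniformProb, mul_expect]
    refine expect_le_expect fun σ _ ↦ ?_
    by_cases hσ : E σ
    · have hinsert : #{y | κ (σ y) = κ (σ p')} ≤ #{y ∈ Tᶜ | κ (σ y) = κ (σ p')} + 1 := by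
        refine (card_le_card fun y hy ↦ ?_).trans (card_insert_le p' _)
        simp only [mem_filter, mem_univ, true_and, mem_insert, mem_compl] at hy ⊢
        by_cases hyT : y ∈ T
        · exact Or.inl (huniq σ hσ y hyT hy)
        · exact Or.inr ⟨hyT, hy⟩
      rw [card_filter_colour_apply_eq] at hinsert
      rify at hinsert
      simp only [hσ, true_and, if_true]
      linarith [hκ (σ p')]
    · simp [hσ]
  rw [hE.expect_card_filter_colour_eq hp hp'] at hcount
  have hcompl : (#Tᶜ : ℝ) ≤ N := mod_cast card_le_univ _
  have hmul := hcount.trans (mul_le_mul_of_nonneg_right hcompl (uniformProb_nonneg _))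
  exact le_of_mul_le_mul_left (by linarith) hN

theorem IsDeterminedOn.le_uniformProb_and_forall_colour_eq (hE : IsDeterminedOn E T)
    (hinj : ∀ σ, E σ → Set.InjOn (fun y ↦ κ (σ y)) T) (hρ : ∀ s ∈ S, ρ s ∈ T)
    (hρinj : Set.InjOn ρ S) (hST : Disjoint S T)
    (hκ : ∀ x, q * Fintype.card α + 1 ≤ #{y | κ y = κ x}) (hq : 0 ≤ q) :
    q ^ #S * uniformProb E ≤
      uniformProb fun σ : Perm α ↦ E σ ∧ ∀ s ∈ S, κ (σ s) = κ (σ (ρ s)) := by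
  induction S using Finset.induction_on with
  | empty => simp
  | insert p S hpS ih =>
    rw [card_insert_of_notMem hpS]
    rw [disjoint_insert_left] at hST
    rw [coe_insert, Set.injOn_insert (mod_cast hpS)] at hρinj
    simp only [forall_mem_insert] at hρ ⊢
    have huniq : ∀ σ : Perm α, (E σ ∧ ∀ s ∈ S, κ (σ s) = κ (σ (ρ s))) →
        ∀ y ∈ T ∪ S, κ (σ y) = κ (σ (ρ p)) → y = ρ p := by
      rintro σ ⟨hEσ, hσ⟩ y hy hcolour
      rcases mem_union.1 hy with hyT | hyS
      · exact hinj σ hEσ hyT hρ.1 hcolour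
      · rw [hσ y hyS] at hcolour
        exact (hρinj.2 ⟨y, hyS, hinj σ hEσ (hρ.2 y hyS) hρ.1 hcolour⟩).elim
    calc q ^ (#S + 1) * uniformProb E
      _ = q * (q ^ #S * uniformProb E) := by ring
      _ ≤ q * uniformProb (fun σ : Perm α ↦ E σ ∧ ∀ s ∈ S, κ (σ s) = κ (σ (ρ s))) := by
        gcongr
        exact ih hρ.2 hρinj.1 hST.2
      _ ≤ uniformProb (fun σ : Perm α ↦
          (E σ ∧ ∀ s ∈ S, κ (σ s) = κ (σ (ρ s))) ∧ κ (σ p) = κ (σ (ρ p))) :=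
        (hE.and_forall hρ.2).le_uniformProb_and_colour_eq (by simp [hST.1, hpS])
          (mem_union_left S hρ.1) huniq hκ
      _ = _ := uniformProb_congr fun σ ↦ by tauto

end ColourCoincidences

section UniformMatching

open Classical in
theorem uniformProb_eq_card_div {α : Type*} [Fintype α] (P : α → Prop) :
    uniformProb P = (#{a | P a} : ℝ) / Fintype.card α := by
  rw [uniformProb, Fintype.expect_eq_sum_div_card, sum_boole]

theorem card_fibre_eq_card_fibre_one {G β : Type*} [Group G] [Fintype G] [DecidableEq β] {g : G → β}
    (hg : ∀ a b c, g a = g b → g (c * a) = g (c * b)) (b : G) :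
    #{a | g a = g b} = #{a | g a = g 1} := by
  refine (card_equiv (Equiv.mulLeft b) fun a ↦ ?_).symm
  simp only [mem_filter, mem_univ, true_and, coe_mulLeft]
  exact ⟨fun h ↦ by simpa using hg a 1 b h, fun h ↦ by simpa using hg (b * a) b b⁻¹ h⟩

/-- The fibres of `g` are translates of each other, so `g` sends the uniform distribution on `G` to
the uniform distribution on its range. -/
theorem uniformProb_comp_eq_ncard_div_ncard {G β : Type*} [Group G] [Fintype G] {g : G → β}
    (hg : ∀ a b c, g a = g b → g (c * a) = g (c * b)) (P : β → Prop) :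
    uniformProb (fun a ↦ P (g a)) =
      ({b ∈ Set.range g | P b}.ncard : ℝ) / (Set.range g).ncard := by
  classical
  have hcount : ∀ Q : β → Prop, #{a | Q (g a)} = #{b ∈ univ.image g | Q b} * #{a | g a = g 1} :=
    fun Q ↦ by
      rw [card_eq_sum_card_fiberwise (f := g) (t := {b ∈ univ.image g | Q b})
        fun a ha ↦ by simpa using ha]
      refine sum_const_nat fun b hb ↦ ?_
      obtain ⟨⟨a, rfl⟩, hQ⟩ : (∃ a, g a = b) ∧ Q b := by simpa using hb
      rw [← card_fibre_eq_card_fibre_one hg a, filter_filter]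
      congr 1
      ext x
      simp only [mem_filter, mem_univ, true_and, and_iff_right_iff_imp]
      rintro h
      rwa [h]
  have htotal := hcount fun _ ↦ True
  have hfibre : #{a | g a = g 1} ≠ 0 := (card_pos.2 ⟨1, by simp⟩).ne'
  have hncard : ∀ Q : β → Prop, {b ∈ Set.range g | Q b}.ncard = #{b ∈ univ.image g | Q b} :=
    fun Q ↦ by simp [← Set.ncard_coe_finset]
  have hrange := hncard fun _ ↦ True
  simp only [filter_true, card_univ, and_true, Set.ofPred_mem_eq] at htotal hrange
  rw [uniformProb_eq_card_div, hcount, htotal, hncard, hrange]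
  push_cast
  rw [mul_div_mul_right _ _ (by exact_mod_cast hfibre)]

variable {n r : ℕ}

/-- The bijection between the positions `Fin n × Fin r`, used as the points that permutations act
on, and the vertices `1, …, r * n`. -/
def vertex (v : Fin n × Fin r) : ℕ := finProdFinEquiv v + 1

/-- The `j`-th edge of the matching encoded by `σ`. -/
def edge (σ : Perm (Fin n × Fin r)) (j : Fin n) : Finset ℕ :=
  univ.image fun i ↦ vertex (σ (j, i))

/-- The ordered matching encoded by the permutation `σ`: its edges are the images under `σ` of the
rows `{j} × Fin r`. Every ordered matching is encoded by the same number of permutations. -/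
def matchingOf (σ : Perm (Fin n × Fin r)) : Finset (Finset ℕ) := univ.image (edge σ)

theorem vertex_injective : Function.Injective (vertex (n := n) (r := r)) := fun _ _ h ↦
  finProdFinEquiv.injective (Fin.ext (Nat.succ_injective h))

theorem image_vertex : univ.image (vertex (n := n) (r := r)) = Icc 1 (r * n) := by
  refine eq_of_subset_of_card_le (fun x hx ↦ ?_) ?_
  · obtain ⟨v, rfl⟩ : ∃ v, vertex v = x := by simpa using hx
    rw [mem_Icc, mul_comm]
    exact ⟨Nat.succ_pos _, (finProdFinEquiv v).2⟩
  · simp [card_image_of_injective _ vertex_injective, mul_comm]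

theorem mem_edge {σ : Perm (Fin n × Fin r)} {j : Fin n} {x : ℕ} :
    x ∈ edge σ j ↔ ∃ i, vertex (σ (j, i)) = x := by
  simp [edge]

theorem vertex_apply_inj {σ : Perm (Fin n × Fin r)} {v w : Fin n × Fin r} :
    vertex (σ v) = vertex (σ w) ↔ v = w :=
  vertex_injective.eq_iff.trans σ.injective.eq_iff

theorem card_edge (σ : Perm (Fin n × Fin r)) (j : Fin n) : #(edge σ j) = r := by
  rw [edge, card_image_of_injective, card_univ, Fintype.card_fin]
  exact fun i i' h ↦ (Prod.mk.inj (vertex_apply_inj.1 h)).2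

theorem disjoint_edge (σ : Perm (Fin n × Fin r)) {j j' : Fin n} (h : j ≠ j') :
    Disjoint (edge σ j) (edge σ j') := by
  simp only [disjoint_left, mem_edge]
  rintro x ⟨i, rfl⟩ ⟨i', h'⟩
  exact h (Prod.mk.inj (vertex_apply_inj.1 h')).1.symm

theorem edge_injective (hr : 0 < r) (σ : Perm (Fin n × Fin r)) : Function.Injective (edge σ) :=
  fun j j' h ↦ by
    by_contra hne
    have hempty := disjoint_edge σ hne
    rw [h, disjoint_self, bot_eq_empty, ← card_eq_zero, card_edge] at hempty
    exact hr.ne' hempty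

theorem mem_mSupport {M : Finset (Finset ℕ)} {x : ℕ} : x ∈ mSupport M ↔ ∃ e ∈ M, x ∈ e := by
  simp [mSupport]

theorem isOrderedMatching_matchingOf (hr : 0 < r) (σ : Perm (Fin n × Fin r)) :
    IsOrderedMatching r n (matchingOf σ) := by
  refine ⟨⟨?_, ?_⟩, ?_, ?_⟩
  · simp [matchingOf, card_edge]
  · simp only [matchingOf, forall_mem_image]
    exact fun j _ j' _ h ↦ disjoint_edge σ fun hj ↦ h (hj ▸ rfl)
  · rw [matchingOf, card_image_of_injective _ (edge_injective hr σ), card_univ, Fintype.card_fin]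
  · ext x
    rw [← image_vertex, mem_image, mem_mSupport, σ.surjective.exists]
    simp [matchingOf, mem_edge]

theorem exists_edge_eq {f : Fin n → Finset ℕ} (hcard : ∀ j, #(f j) = r)
    (hdisj : Pairwise fun j j' ↦ Disjoint (f j) (f j')) (hsub : ∀ j, f j ⊆ Icc 1 (r * n)) :
    ∃ σ : Perm (Fin n × Fin r), ∀ j, edge σ j = f j := by
  obtain ⟨x, hx_image, hx_row⟩ : ∃ x : Fin n → Fin r → ℕ, (∀ j, univ.image (x j) = f j) ∧
      ∀ j, Function.Injective (x j) :=
    ⟨fun j ↦ orderEmbOfFin (f j) (hcard j), fun j ↦ image_orderEmbOfFin_univ _ _,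
      fun j ↦ (orderEmbOfFin _ _).injective⟩
  have hx_mem : ∀ j i, x j i ∈ f j := fun j i ↦ hx_image j ▸ mem_image_of_mem _ (mem_univ i)
  have hx_vertex : ∀ v : Fin n × Fin r, ∃ w : Fin n × Fin r, vertex w = x v.1 v.2 := fun v ↦ by
    simpa [← image_vertex] using hsub _ (hx_mem v.1 v.2)
  choose s hs using hx_vertex
  have hs_inj : Function.Injective s := by
    rintro ⟨j, i⟩ ⟨j', i'⟩ h
    have hx : x j i = x j' i' := by rw [← hs (j, i), ← hs (j', i'), h]
    have hj : j = j' := by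
      by_contra hne
      exact disjoint_left.1 (hdisj hne) (hx_mem j i) (hx ▸ hx_mem j' i')
    subst hj
    rw [hx_row j hx]
  refine ⟨Equiv.ofBijective s (Finite.injective_iff_bijective.1 hs_inj), fun j ↦ ?_⟩
  simp only [edge, ofBijective_apply, hs, hx_image]

theorem exists_matchingOf_eq {M : Finset (Finset ℕ)} (hM : IsOrderedMatching r n M) :
    ∃ σ : Perm (Fin n × Fin r), matchingOf σ = M := by
  obtain ⟨⟨hcard, hdisj⟩, hn, hsupp⟩ := hM
  let e := (M.equivFinOfCardEq hn).symm
  obtain ⟨σ, hσ⟩ := exists_edge_eq (f := fun j ↦ (e j).1) (fun j ↦ hcard _ (e j).2)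
    (fun j j' h ↦ hdisj _ (e j).2 _ (e j').2 (Subtype.val_injective.ne (e.injective.ne h)))
    fun j x hx ↦ hsupp ▸ mem_mSupport.2 ⟨_, (e j).2, hx⟩
  refine ⟨σ, ?_⟩
  ext f
  simp only [matchingOf, hσ, mem_image, mem_univ, true_and]
  exact ⟨fun ⟨j, hj⟩ ↦ hj ▸ (e j).2, fun hf ↦ ⟨e.symm ⟨f, hf⟩, by simp⟩⟩

theorem range_matchingOf (hr : 0 < r) :
    Set.range (matchingOf (n := n) (r := r)) = {M | IsOrderedMatching r n M} :=
  Set.Subset.antisymm (Set.range_subset_iff.2 (isOrderedMatching_matchingOf hr))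
    fun _ hM ↦ exists_matchingOf_eq hM

theorem matchingOf_mul (π σ : Perm (Fin n × Fin r)) :
    matchingOf (π * σ) =
      (matchingOf σ).image fun e ↦ e.image (Function.extend vertex (vertex ∘ π) id) := by
  rw [matchingOf, matchingOf, image_image]
  refine image_congr fun j _ ↦ ?_
  simp [edge, image_image, Function.comp_def, vertex_injective.extend_apply]

theorem uniformProb_matchingOf (hr : 0 < r) (P : Finset (Finset ℕ) → Prop) :
    uniformProb (fun σ : Perm (Fin n × Fin r) ↦ P (matchingOf σ)) =
      (Nat.card {M : Finset (Finset ℕ) | IsOrderedMatching r n M ∧ P M} : ℝ) /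
        Nat.card {M : Finset (Finset ℕ) | IsOrderedMatching r n M} := by
  rw [uniformProb_comp_eq_ncard_div_ncard (fun σ τ π h ↦ by rw [matchingOf_mul, matchingOf_mul, h]),
    range_matchingOf hr]
  rfl

end UniformMatching

section TwinFamilies

theorem matchIso_image {ι κ : Type*} [Fintype κ] {Q : Finset ι} {a b : ι → κ → ℕ}
    (hlt : ∀ x ∈ Q, ∀ y ∈ Q, ∀ i i', a x i < a y i' → b x i < b y i')
    (heq : ∀ x ∈ Q, ∀ y ∈ Q, ∀ i i', a x i = a y i' → b x i = b y i') :
    MatchIso (Q.image fun x ↦ univ.image (a x)) (Q.image fun x ↦ univ.image (b x)) := by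
  obtain ⟨f, hf⟩ : ∃ f : ℕ → ℕ, ∀ x ∈ Q, ∀ i, f (a x i) = b x i := by
    have hfactor : (fun z : Q × κ ↦ b z.1 z.2).FactorsThrough fun z ↦ a z.1 z.2 :=
      fun z w h ↦ heq _ z.1.2 _ w.1.2 _ _ h
    exact ⟨Function.extend (fun z : Q × κ ↦ a z.1 z.2) (fun z ↦ b z.1 z.2) id,
      fun x hx i ↦ hfactor.extend_apply id (⟨x, hx⟩, i)⟩
  have hsupp : ∀ (c : ι → κ → ℕ) (v : ℕ),
      v ∈ mSupport (Q.image fun x ↦ univ.image (c x)) ↔ ∃ x ∈ Q, ∃ i, c x i = v := fun c v ↦ by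
    simp [mem_mSupport]
  have hmono : ∀ v ∈ mSupport (Q.image fun x ↦ univ.image (a x)),
      ∀ w ∈ mSupport (Q.image fun x ↦ univ.image (a x)), v < w → f v < f w := by
    simp only [hsupp]
    rintro _ ⟨x, hx, i, rfl⟩ _ ⟨y, hy, i', rfl⟩ h
    rw [hf x hx, hf y hy]
    exact hlt x hx y hy i i' h
  refine ⟨f, ⟨fun v hv ↦ ?_, StrictMonoOn.injOn fun v hv w hw h ↦ hmono v hv w hw h,
    fun w hw ↦ ?_⟩, hmono, ?_⟩
  · obtain ⟨x, hx, i, rfl⟩ := (hsupp a v).1 hv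
    exact (hsupp b _).2 ⟨x, hx, i, (hf x hx i).symm⟩
  · obtain ⟨x, hx, i, rfl⟩ := (hsupp b w).1 hw
    exact ⟨a x i, (hsupp a _).2 ⟨x, hx, i, rfl⟩, hf x hx i⟩
  · rw [image_image]
    refine image_congr fun x hx ↦ ?_
    simp only [Function.comp_def, image_image, hf x hx]

variable {n r : ℕ} {β : Type*} {κ : Fin n × Fin r → β} {σ : Perm (Fin n × Fin r)}
  {Q : Finset (Fin n × Fin n)} {x y : Fin n × Fin n} {p q : Fin n × Fin r} {j : Fin n}

/-- The colours, under a colouring `κ` of the vertices, of the edge `j` of the matching encoded by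
`σ`. In the application the colour classes are consecutive blocks of vertices. -/
def shape (κ : Fin n × Fin r → β) (σ : Perm (Fin n × Fin r)) (j : Fin n) (i : Fin r) : β :=
  κ (σ (j, i))

/-- The edges `j` and `j'` are distinct and have the same shape, with `r` different colours. -/
structure IsTwinPair (κ : Fin n × Fin r → β) (σ : Perm (Fin n × Fin r)) (j j' : Fin n) : Prop where
  ne : j ≠ j'
  shape_eq : shape κ σ j = shape κ σ j'
  shape_injective : Function.Injective (shape κ σ j)

/-- The pairs of edges in `Q` are twin pairs no two of which share a colour. -/
structure IsTwinFamily (κ : Fin n × Fin r → β) (σ : Perm (Fin n × Fin r))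
    (Q : Finset (Fin n × Fin n)) : Prop where
  isTwinPair : ∀ x ∈ Q, IsTwinPair κ σ x.1 x.2
  eq_of_shape_eq : ∀ x ∈ Q, ∀ y ∈ Q, ∀ i i', shape κ σ x.1 i = shape κ σ y.1 i' → x = y

theorem isTwinFamily_empty : IsTwinFamily κ σ ∅ := ⟨by simp, by simp⟩

theorem IsTwinFamily.mono {Q' : Finset (Fin n × Fin n)} (hQ : IsTwinFamily κ σ Q) (h : Q' ⊆ Q) :
    IsTwinFamily κ σ Q' :=
  ⟨fun x hx ↦ hQ.isTwinPair x (h hx), fun x hx y hy ↦ hQ.eq_of_shape_eq x (h hx) y (h hy)⟩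

theorem IsTwinFamily.eq_of_incident (hr : 0 < r) (hQ : IsTwinFamily κ σ Q) (hx : x ∈ Q)
    (hy : y ∈ Q) (hjx : j = x.1 ∨ j = x.2) (hjy : j = y.1 ∨ j = y.2) : x = y := by
  have hshape : ∀ z ∈ Q, (j = z.1 ∨ j = z.2) → shape κ σ j = shape κ σ z.1 := by
    rintro z hz (rfl | rfl)
    · rfl
    · exact (hQ.isTwinPair z hz).shape_eq.symm
  refine hQ.eq_of_shape_eq x hx y hy ⟨0, hr⟩ ⟨0, hr⟩ ?_
  rw [← hshape x hx hjx, hshape y hy hjy]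

/-- Since twin pairs have disjoint sets of colours, the order of two vertices of a family is decided
by their colours alone, and these are the same in both halves. -/
theorem IsTwinFamily.matchIso [LinearOrder β] (hκ : ∀ v w, vertex v ≤ vertex w → κ v ≤ κ w)
    (hQ : IsTwinFamily κ σ Q) :
    MatchIso (Q.image fun x ↦ edge σ x.1) (Q.image fun x ↦ edge σ x.2) := by
  have heq : ∀ x ∈ Q, ∀ y ∈ Q, ∀ i i', shape κ σ x.1 i = shape κ σ y.1 i' → x = y ∧ i = i' :=
    fun x hx y hy i i' h ↦ by
      obtain rfl := hQ.eq_of_shape_eq x hx y hy i i' h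
      exact ⟨rfl, (hQ.isTwinPair x hx).shape_injective h⟩
  refine matchIso_image (fun x hx y hy i i' h ↦ ?_) fun x hx y hy i i' h ↦ ?_
  · have hle : shape κ σ x.1 i ≤ shape κ σ y.1 i' := hκ _ _ h.le
    have hlt : shape κ σ x.1 i < shape κ σ y.1 i' := hle.lt_of_ne fun he ↦ by
      obtain ⟨rfl, rfl⟩ := heq x hx y hy i i' he
      exact h.false
    rw [(hQ.isTwinPair x hx).shape_eq, (hQ.isTwinPair y hy).shape_eq] at hlt
    exact lt_of_not_ge fun hge ↦ hlt.not_ge (hκ _ _ hge)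
  · obtain ⟨rfl, rfl⟩ := heq x hx y hy i i' (congrArg κ (vertex_injective h))
    rfl

theorem IsTwinFamily.hasTwins [LinearOrder β] (hr : 0 < r)
    (hκ : ∀ v w, vertex v ≤ vertex w → κ v ≤ κ w) (hQ : IsTwinFamily κ σ Q) :
    HasTwins (matchingOf σ) #Q := by
  refine ⟨_, _, ?_, ?_, ?_, hQ.matchIso hκ,
    card_image_of_injOn fun x hx y hy h ↦ ?_, card_image_of_injOn fun x hx y hy h ↦ ?_⟩
  · exact image_subset_iff.2 fun x _ ↦ mem_image_of_mem _ (mem_univ x.1)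
  · exact image_subset_iff.2 fun x _ ↦ mem_image_of_mem _ (mem_univ x.2)
  · simp only [disjoint_left, mem_mSupport, mem_image, exists_exists_and_eq_and, not_exists,
      not_and]
    rintro v ⟨x, hx, hvx⟩ y hy hvy
    refine disjoint_left.1 (disjoint_edge σ fun h ↦ ?_) hvx hvy
    obtain rfl := hQ.eq_of_incident hr hx hy (Or.inl rfl) (Or.inr h)
    exact (hQ.isTwinPair x hx).ne h
  · exact hQ.eq_of_incident hr hx hy (Or.inl rfl) (Or.inl (edge_injective hr σ h))
  · exact hQ.eq_of_incident hr hx hy (Or.inr rfl) (Or.inr (edge_injective hr σ h))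

theorem IsTwinFamily.mul_swap (hQ : IsTwinFamily κ σ Q)
    (hp : ∀ x ∈ Q, ¬(p.1 = x.1 ∨ p.1 = x.2)) (hq : ∀ x ∈ Q, ¬(q.1 = x.1 ∨ q.1 = x.2)) :
    IsTwinFamily κ (σ * swap p q) Q := by
  have hrow : ∀ j, p.1 ≠ j → q.1 ≠ j → shape κ (σ * swap p q) j = shape κ σ j :=
    fun j hpj hqj ↦ funext fun i ↦ by
      rw [shape, Perm.mul_apply, swap_apply_of_ne_of_ne, shape]
      · rintro rfl; exact hpj rfl
      · rintro rfl; exact hqj rfl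
  have hfst : ∀ x ∈ Q, shape κ (σ * swap p q) x.1 = shape κ σ x.1 := fun x hx ↦
    hrow _ (not_or.1 (hp x hx)).1 (not_or.1 (hq x hx)).1
  have hsnd : ∀ x ∈ Q, shape κ (σ * swap p q) x.2 = shape κ σ x.2 := fun x hx ↦
    hrow _ (not_or.1 (hp x hx)).2 (not_or.1 (hq x hx)).2
  refine ⟨fun x hx ↦ ?_, fun x hx y hy i i' ↦ ?_⟩
  · obtain ⟨hne, heq, hinj⟩ := hQ.isTwinPair x hx
    exact ⟨hne, by rw [hfst x hx, hsnd x hx, heq], by rwa [hfst x hx]⟩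
  · rw [hfst x hx, hfst y hy]
    exact hQ.eq_of_shape_eq x hx y hy i i'

theorem IsTwinFamily.card_filter_incident_le_one (hr : 0 < r) (hQ : IsTwinFamily κ σ Q)
    (j : Fin n) : #{x ∈ Q | j = x.1 ∨ j = x.2} ≤ 1 := by
  rw [card_le_one]
  simp only [mem_filter]
  exact fun x hx y hy ↦ hQ.eq_of_incident hr hx.1 hy.1 hx.2 hy.2

theorem sum_card_filter_incident_le (r : ℕ) (Q : Finset (Fin n × Fin n)) :
    ∑ p : Fin n × Fin r, #{x ∈ Q | p.1 = x.1 ∨ p.1 = x.2} ≤ 2 * r * #Q :=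
  calc ∑ p : Fin n × Fin r, #{x ∈ Q | p.1 = x.1 ∨ p.1 = x.2}
    _ = r * ∑ j, #{x ∈ Q | j = x.1 ∨ j = x.2} := by
      simp [Fintype.sum_prod_type, mul_sum]
    _ = r * ∑ x ∈ Q, #{j | j = x.1 ∨ j = x.2} := by
      simp only [card_filter, sum_comm (s := univ (α := Fin n))]
    _ ≤ r * ∑ _x ∈ Q, 2 := by
      gcongr with x
      exact (card_le_card fun j ↦ by simp).trans (card_le_two (a := x.1) (b := x.2))
    _ = 2 * r * #Q := by simp; ring

open Classical in
/-- The maximum size of a twin family: a lower bound for the size of the largest twins that changes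
little when two values of `σ` are exchanged. -/
noncomputable def twinNumber (κ : Fin n × Fin r → β) (σ : Perm (Fin n × Fin r)) : ℕ :=
  {Q | IsTwinFamily κ σ Q}.toFinset.sup card

theorem IsTwinFamily.card_le_twinNumber (hQ : IsTwinFamily κ σ Q) : #Q ≤ twinNumber κ σ := by
  classical
  exact le_sup (f := card) (by simpa using hQ)

theorem exists_isTwinFamily_card_eq (κ : Fin n × Fin r → β) (σ : Perm (Fin n × Fin r)) :
    ∃ Q, IsTwinFamily κ σ Q ∧ #Q = twinNumber κ σ := by
  classical
  obtain ⟨Q, hQ, h⟩ := exists_mem_eq_sup {Q | IsTwinFamily κ σ Q}.toFinset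
    ⟨∅, by simpa using isTwinFamily_empty⟩ card
  exact ⟨Q, by simpa using hQ, h.symm⟩

theorem hasTwins_twinNumber [LinearOrder β] (hr : 0 < r)
    (hκ : ∀ v w, vertex v ≤ vertex w → κ v ≤ κ w) (σ : Perm (Fin n × Fin r)) :
    HasTwins (matchingOf σ) (twinNumber κ σ) := by
  obtain ⟨Q, hQ, hcard⟩ := exists_isTwinFamily_card_eq κ σ
  exact hcard ▸ hQ.hasTwins hr hκ

theorem IsTwinFamily.card_le_twinNumber_mul_swap (hQ : IsTwinFamily κ σ Q) (p q : Fin n × Fin r) :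
    #Q ≤ twinNumber κ (σ * swap p q) +
      (#{x ∈ Q | p.1 = x.1 ∨ p.1 = x.2} + #{x ∈ Q | q.1 = x.1 ∨ q.1 = x.2}) := by
  set P := {x ∈ Q | p.1 = x.1 ∨ p.1 = x.2} ∪ {x ∈ Q | q.1 = x.1 ∨ q.1 = x.2}
  have hfamily : IsTwinFamily κ (σ * swap p q) (Q \ P) :=
    (hQ.mono sdiff_subset).mul_swap (fun x hx ↦ by grind) fun x hx ↦ by grind
  have hsdiff := le_card_sdiff P Q
  have hunion : #P ≤ _ := card_union_le _ _
  have hmax := hfamily.card_le_twinNumber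
  omega

theorem uniformVariance_twinNumber_le (hr : 0 < r) (κ : Fin n × Fin r → β) :
    uniformVariance (fun σ ↦ (twinNumber κ σ : ℝ)) ≤ 8 * r * 𝔼 σ, (twinNumber κ σ : ℝ) := by
  choose Q hQ hcard using exists_isTwinFamily_card_eq κ
  have hvar := uniformVariance_le_of_sub_le (f := fun σ ↦ (twinNumber κ σ : ℝ))
    (t := fun σ p ↦ (#{x ∈ Q σ | p.1 = x.1 ∨ p.1 = x.2} : ℝ)) (fun σ p ↦ by positivity)
    (fun σ p ↦ mod_cast (hQ σ).card_filter_incident_le_one hr p.1) fun σ p q ↦ by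
      have h := (hQ σ).card_le_twinNumber_mul_swap p q
      rw [hcard] at h
      rify at h
      linarith
  refine hvar.trans ?_
  have hsum : 𝔼 σ, ∑ p : Fin n × Fin r, (#{x ∈ Q σ | p.1 = x.1 ∨ p.1 = x.2} : ℝ) ≤
      𝔼 σ, 2 * r * (twinNumber κ σ : ℝ) :=
    expect_le_expect fun σ _ ↦ by
      rw [← hcard]
      exact_mod_cast sum_card_filter_incident_le r (Q σ)
  rw [← mul_expect] at hsum
  linarith

end TwinFamilies

section Deletion

open Classical in
theorem exists_subset_forall_rel_imp_eq {α : Type*} (X : Finset α) (R : α → α → Prop) :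
    ∃ Q ⊆ X, (∀ x ∈ Q, ∀ y ∈ Q, R x y → x = y) ∧
      #X ≤ #Q + #{z ∈ X.offDiag | R z.1 z.2} := by
  set D := {z ∈ X.offDiag | R z.1 z.2}
  refine ⟨X \ D.image Prod.fst, sdiff_subset, fun x hx y hy hR ↦ ?_, ?_⟩
  · rw [mem_sdiff] at hx hy
    by_contra hne
    exact hx.2 (mem_image.2 ⟨(x, y), mem_filter.2 ⟨mem_offDiag.2 ⟨hx.1, hy.1, hne⟩, hR⟩, rfl⟩)
  · have hsdiff := le_card_sdiff (D.image Prod.fst) X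
    have himage : #(D.image Prod.fst) ≤ #D := card_image_le
    omega

end Deletion

section Blocks

theorem exists_monotone_card_fibre_le {N L : ℕ} (hL : 0 < L) (hLN : L ≤ N) :
    ∃ κ : Fin N → ℕ, Monotone κ ∧ (∀ v, L ≤ #{w | κ w = κ v}) ∧
      ∀ c, #{w | κ w = c} ≤ 2 * L := by
  have hquot : 1 ≤ N / L := (Nat.one_le_div_iff hL).2 hLN
  have hmul : N / L * L ≤ N := Nat.div_mul_le_self N L
  refine ⟨fun v ↦ min (v / L) (N / L - 1),
    fun v w h ↦ min_le_min_right _ (Nat.div_le_div_right h), fun v ↦ ?_, fun c ↦ ?_⟩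
  · set c := min ((v : ℕ) / L) (N / L - 1)
    have hc : c + 1 ≤ N / L := by omega
    have hblock : ∀ i < L, c * L + i < N := fun i hi ↦ by nlinarith
    calc L = #(univ : Finset (Fin L)) := (card_fin L).symm
      _ ≤ _ := card_le_card_of_injOn (fun i ↦ ⟨c * L + i, hblock i i.2⟩) (fun i _ ↦ ?_)
        fun i _ i' _ h ↦ Fin.ext (by simpa using h)
    have hdiv : (c * L + i) / L = c := by
      rw [mul_comm, Nat.mul_add_div hL, Nat.div_eq_of_lt i.2, add_zero]
    simp only [coe_filter, mem_univ, true_and, Set.mem_ofPred_eq, hdiv]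
    omega
  · calc #{w : Fin N | min ((w : ℕ) / L) (N / L - 1) = c}
      _ ≤ #(Ico (c * L) (c * L + 2 * L)) := by
        refine card_le_card_of_injOn Fin.val (fun w hw ↦ ?_) Fin.val_injective.injOn
        simp only [coe_filter, mem_univ, true_and, Set.mem_ofPred_eq] at hw
        have hlast : (w : ℕ) / L ≤ N / L := Nat.div_le_div_right w.2.le
        have hlow : c ≤ (w : ℕ) / L := hw ▸ min_le_left _ _
        have hhigh : (w : ℕ) / L < c + 2 := by omega
        rw [coe_Ico, Set.mem_Ico, ← add_mul]
        exact ⟨(Nat.le_div_iff_mul_le hL).1 hlow, (Nat.div_lt_iff_lt_mul hL).1 hhigh⟩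
      _ = 2 * L := by simp

theorem exists_vertex_colouring {n r L : ℕ} (hL : 0 < L) (hLn : L ≤ n * r) :
    ∃ κ : Fin n × Fin r → ℕ, (∀ v w, vertex v ≤ vertex w → κ v ≤ κ w) ∧
      (∀ v, L ≤ #{w | κ w = κ v}) ∧ ∀ c, #{w | κ w = c} ≤ 2 * L := by
  obtain ⟨κ, hmono, hlower, hupper⟩ := exists_monotone_card_fibre_le hL hLn
  have hcard : ∀ c, #{w | κ (finProdFinEquiv w) = c} = #{w | κ w = c} := fun c ↦
    card_equiv finProdFinEquiv fun w ↦ by simp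
  refine ⟨fun v ↦ κ (finProdFinEquiv v), fun v w h ↦ hmono (Nat.succ_le_succ_iff.1 h),
    fun v ↦ ?_, fun c ↦ ?_⟩
  · rw [hcard]
    exact hlower _
  · rw [hcard]
    exact hupper c

end Blocks

section FirstMoment

variable {n r : ℕ} {β : Type*} {κ : Fin n × Fin r → β} {q : ℝ} {I J A B : Finset (Fin n)}

/-- The twin pairs `x` and `y` share a colour. -/
def ShareColour (κ : Fin n × Fin r → β) (σ : Perm (Fin n × Fin r)) (x y : Fin n × Fin n) : Prop :=
  ∃ i i', shape κ σ x.1 i = shape κ σ y.1 i'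

open Classical in
theorem card_filter_isTwinPair_le (κ : Fin n × Fin r → β) (σ : Perm (Fin n × Fin r))
    (X : Finset (Fin n × Fin n)) :
    #{x ∈ X | IsTwinPair κ σ x.1 x.2} ≤ twinNumber κ σ +
      #{z ∈ X.offDiag | (IsTwinPair κ σ z.1.1 z.1.2 ∧ IsTwinPair κ σ z.2.1 z.2.2) ∧
        ShareColour κ σ z.1 z.2} := by
  obtain ⟨Q, hQ, hfree, hcard⟩ := exists_subset_forall_rel_imp_eq
    {x ∈ X | IsTwinPair κ σ x.1 x.2} (ShareColour κ σ)
  have hfamily : IsTwinFamily κ σ Q :=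
    ⟨fun x hx ↦ (mem_filter.1 (hQ hx)).2, fun x hx y hy i i' h ↦ hfree x hx y hy ⟨i, i', h⟩⟩
  refine hcard.trans (add_le_add hfamily.card_le_twinNumber (card_le_card fun z hz ↦ ?_))
  simp only [mem_filter, mem_offDiag] at hz ⊢
  tauto

theorem sum_offDiag_product_le {m : ℕ} {u v : ℝ} (hA : #A = m) (hB : #B = m) (hu : 0 ≤ u)
    (hv : 0 ≤ v) :
    ∑ z ∈ (A ×ˢ B).offDiag,
      ((if z.1.1 = z.2.1 then u else 0) + (if z.1.2 = z.2.2 then u else 0) + v) ≤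
      2 * m ^ 3 * u + m ^ 4 * v :=
  calc _ ≤ ∑ z ∈ (A ×ˢ B) ×ˢ (A ×ˢ B),
        ((if z.1.1 = z.2.1 then u else 0) + (if z.1.2 = z.2.2 then u else 0) + v) :=
      sum_le_sum_of_subset_of_nonneg (fun z hz ↦ by simp_all [mem_offDiag])
        fun z _ _ ↦ by positivity
    _ = ∑ a ∈ A, ∑ b ∈ B, ∑ a' ∈ A, ∑ b' ∈ B,
        ((if a = a' then u else 0) + (if b = b' then u else 0) + v) := by
      simp only [sum_product]
    _ = ∑ _a ∈ A, ∑ _b ∈ B, (m * u + m * u + m * (m * v)) := by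
      refine sum_congr rfl fun a ha ↦ sum_congr rfl fun b hb ↦ ?_
      simp [sum_add_distrib, ha, hb, hA, hB]
    _ = 2 * m ^ 3 * u + m ^ 4 * v := by
      rw [sum_const, sum_const, hA, hB, nsmul_eq_mul, nsmul_eq_mul]
      ring

variable [DecidableEq β]

theorem uniformProb_and_forall_shape_eq_le {E : Perm (Fin n × Fin r) → Prop} {ρ : Fin n → Fin n}
    (hE : IsDeterminedOn E (I ×ˢ univ)) (hρ : ∀ j ∈ J, ρ j ∈ I) (hJI : Disjoint J I)
    (hcard : 2 * (#I + #J) ≤ n) (hκ : ∀ c, 2 * (#{x | κ x = c} : ℝ) ≤ q * (n * r)) (hq : 0 ≤ q) :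
    uniformProb (fun σ ↦ E σ ∧ ∀ j ∈ J, shape κ σ j = shape κ σ (ρ j)) ≤
      q ^ (#J * r) * uniformProb E := by
  have hrows : ∀ K : Finset (Fin n), #(K ×ˢ (univ : Finset (Fin r))) = #K * r := fun K ↦ by
    rw [card_product, card_univ, Fintype.card_fin]
  rw [← hrows]
  refine (uniformProb_congr fun σ ↦ ?_).trans_le <|
    hE.uniformProb_and_forall_colour_eq_le (S := J ×ˢ univ) (ρ := fun s ↦ (ρ s.1, s.2)) (κ := κ)
      (fun s hs ↦ ?_) (disjoint_product.2 (Or.inl hJI)) ?_ (by simpa using hκ) hq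
  · simp only [shape, funext_iff, Prod.forall, mem_product, mem_univ, and_true]
    grind
  · simpa using hρ s.1 (mem_product.1 hs).1
  · rw [hrows, hrows, Fintype.card_prod, Fintype.card_fin, Fintype.card_fin, ← add_mul, ← mul_assoc]
    exact Nat.mul_le_mul_right r hcard

theorem uniformProb_colour_eq_le (hκ : ∀ c, 2 * (#{x | κ x = c} : ℝ) ≤ q * (n * r))
    (hn : 2 ≤ n) {p p' : Fin n × Fin r} (hp : p ≠ p') :
    uniformProb (fun σ : Perm (Fin n × Fin r) ↦ κ (σ p) = κ (σ p')) ≤ q := by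
  have hr : 1 ≤ r := p.2.pos
  have hE : IsDeterminedOn (fun _ : Perm (Fin n × Fin r) ↦ True) {p'} := fun _ _ _ ↦ id
  have h := hE.uniformProb_and_colour_eq_le (κ := κ) (p := p) (p' := p') (q := q) (by simpa)
    (by simp) (by simp only [card_singleton, Fintype.card_prod, Fintype.card_fin]; nlinarith)
    (by simpa using hκ)
  simpa [uniformProb_of_forall] using h

theorem half_le_uniformProb_shape_injective
    (hκ : ∀ c, 2 * (#{x | κ x = c} : ℝ) ≤ q * (n * r)) (hq : 0 ≤ q) (hn : 2 ≤ n)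
    (hqr : 2 * r ^ 2 * q ≤ 1) (j : Fin n) :
    1 / 2 ≤ uniformProb fun σ ↦ Function.Injective (shape κ σ j) := by
  have hnot : uniformProb (fun σ ↦ ¬ Function.Injective (shape κ σ j)) ≤ r ^ 2 * q :=
    calc uniformProb (fun σ ↦ ¬ Function.Injective (shape κ σ j))
      _ = uniformProb fun σ ↦
          ∃ z ∈ (univ : Finset (Fin r)).offDiag, shape κ σ j z.1 = shape κ σ j z.2 :=
        uniformProb_congr fun σ ↦ by
          simp [Function.Injective, Prod.exists, and_comm]
      _ ≤ ∑ _z ∈ (univ : Finset (Fin r)).offDiag, q :=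
        (uniformProb_exists_le_sum _ _).trans <| sum_le_sum fun z hz ↦
          uniformProb_colour_eq_le hκ hn fun h ↦ (mem_offDiag.1 hz).2.2 (congrArg Prod.snd h)
      _ ≤ r ^ 2 * q := by
        have hcard : #(univ : Finset (Fin r)).offDiag ≤ r ^ 2 := by
          rw [offDiag_card, card_fin, sq]; exact Nat.sub_le _ _
        rw [sum_const, nsmul_eq_mul]
        gcongr
        exact_mod_cast hcard
  have hadd := uniformProb_and_add_uniformProb_and_not (fun _ : Perm (Fin n × Fin r) ↦ True)
    fun σ ↦ Function.Injective (shape κ σ j)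
  simp only [true_and, uniformProb_of_forall fun _ ↦ trivial] at hadd
  linarith

theorem le_uniformProb_isTwinPair {q' : ℝ} (hκ : ∀ c, 2 * (#{x | κ x = c} : ℝ) ≤ q * (n * r))
    (hκ' : ∀ x, q' * (n * r) + 1 ≤ #{y | κ y = κ x}) (hq : 0 ≤ q) (hq' : 0 ≤ q') (hn : 2 ≤ n)
    (hqr : 2 * r ^ 2 * q ≤ 1) {a b : Fin n} (hab : a ≠ b) :
    q' ^ r / 2 ≤ uniformProb fun σ ↦ IsTwinPair κ σ a b := by
  have hE : IsDeterminedOn (fun σ ↦ Function.Injective (shape κ σ a)) ({a} ×ˢ univ) :=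
    fun σ τ hστ h ↦ by
      have hrow : shape κ σ a = shape κ τ a := funext fun i ↦ congrArg κ (hστ (by simp))
      simpa only [hrow] using h
  have hcolour := hE.le_uniformProb_and_forall_colour_eq (S := {b} ×ˢ univ) (κ := κ) (q := q')
    (ρ := fun s ↦ (a, s.2)) (fun σ hσ ↦ ?_) (by simp) (by rintro ⟨j, i⟩ hj ⟨j', i'⟩ hj'; simp_all)
    (disjoint_product.2 (Or.inl (by simpa using hab.symm))) (by simpa using hκ') hq'
  · calc q' ^ r / 2 = q' ^ r * (1 / 2) := by ring
      _ ≤ q' ^ r * uniformProb fun σ ↦ Function.Injective (shape κ σ a) := by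
        gcongr
        exact half_le_uniformProb_shape_injective hκ hq hn hqr a
      _ ≤ uniformProb fun σ ↦ Function.Injective (shape κ σ a) ∧
          ∀ s ∈ {b} ×ˢ univ, κ (σ s) = κ (σ (a, s.2)) := by
        simpa using hcolour
      _ ≤ uniformProb fun σ ↦ IsTwinPair κ σ a b := uniformProb_mono fun σ ⟨hinj, hσ⟩ ↦
        ⟨hab, funext fun i ↦ (hσ (b, i) (by simp)).symm, hinj⟩
  · rintro ⟨j, i⟩ hj ⟨j', i'⟩ hj' h
    simp only [coe_product, coe_singleton, Set.mem_prod, Set.mem_singleton_iff] at hj hj'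
    rw [hj.1, hj'.1] at h ⊢
    exact congrArg _ (hσ h)

theorem uniformProb_shareColour_le (hκ : ∀ c, 2 * (#{x | κ x = c} : ℝ) ≤ q * (n * r))
    (hn : 2 ≤ n) {x y : Fin n × Fin n} (hxy : x.1 ≠ y.1) :
    uniformProb (fun σ ↦ ShareColour κ σ x y) ≤ r ^ 2 * q :=
  calc uniformProb (fun σ ↦ ShareColour κ σ x y)
    _ = uniformProb fun σ ↦ ∃ z ∈ (univ : Finset (Fin r × Fin r)),
        shape κ σ x.1 z.1 = shape κ σ y.1 z.2 :=
      uniformProb_congr fun σ ↦ by simp [ShareColour, Prod.exists]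
    _ ≤ ∑ _z : Fin r × Fin r, q :=
      (uniformProb_exists_le_sum _ _).trans <| sum_le_sum fun z _ ↦
        uniformProb_colour_eq_le hκ hn fun h ↦ hxy (Prod.ext_iff.1 h).1
    _ = r ^ 2 * q := by simp [sq]

theorem uniformProb_two_shape_eq_le (hκ : ∀ c, 2 * (#{x | κ x = c} : ℝ) ≤ q * (n * r))
    (hq : 0 ≤ q) (hn : 6 ≤ n) {j j₁ j₂ : Fin n} (h₁ : j ≠ j₁) (h₂ : j ≠ j₂) (h₁₂ : j₁ ≠ j₂) :
    uniformProb (fun σ ↦ shape κ σ j₁ = shape κ σ j ∧ shape κ σ j₂ = shape κ σ j) ≤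
      q ^ (2 * r) := by
  have h := uniformProb_and_forall_shape_eq_le (E := fun _ ↦ True) (I := {j}) (J := {j₁, j₂})
    (ρ := fun _ ↦ j) (fun _ _ _ ↦ id) (by simp) (by simp [h₁, h₂])
    (by rw [card_pair h₁₂, card_singleton]; exact hn) hκ hq
  simpa [card_pair h₁₂, uniformProb_of_forall] using h

theorem uniformProb_shareColour_and_shape_eq_le
    (hκ : ∀ c, 2 * (#{x | κ x = c} : ℝ) ≤ q * (n * r)) (hq : 0 ≤ q) (hn : 8 ≤ n)
    {x y : Fin n × Fin n} (h₁ : x.1 ≠ y.1) (h₂ : x.2 ≠ y.2)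
    (hdisj : Disjoint {x.2, y.2} ({x.1, y.1} : Finset (Fin n))) :
    uniformProb (fun σ ↦ ShareColour κ σ x y ∧
      shape κ σ x.2 = shape κ σ x.1 ∧ shape κ σ y.2 = shape κ σ y.1) ≤
      r ^ 2 * q ^ (2 * r + 1) := by
  have hE : IsDeterminedOn (fun σ ↦ ShareColour κ σ x y) ({x.1, y.1} ×ˢ univ) :=
    fun σ τ hστ ⟨i, i', h⟩ ↦ ⟨i, i', by
      rwa [shape, shape, ← hστ (by simp : (x.1, i) ∈ _), ← hστ (by simp : (y.1, i') ∈ _)]⟩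
  have h := uniformProb_and_forall_shape_eq_le (ρ := fun j ↦ if j = x.2 then x.1 else y.1) hE
    (fun j _ ↦ by split_ifs <;> simp) hdisj (by rw [card_pair h₁, card_pair h₂]; exact hn) hκ hq
  simp only [forall_mem_insert, mem_singleton, forall_eq, if_true, if_neg h₂.symm,
    card_pair h₂] at h
  calc _ ≤ q ^ (2 * r) * uniformProb fun σ ↦ ShareColour κ σ x y := h
    _ ≤ q ^ (2 * r) * (r ^ 2 * q) := by
      gcongr
      exact uniformProb_shareColour_le hκ (by omega) h₁
    _ = r ^ 2 * q ^ (2 * r + 1) := by ring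

theorem uniformProb_isTwinPair_shareColour_le
    (hκ : ∀ c, 2 * (#{x | κ x = c} : ℝ) ≤ q * (n * r)) (hq : 0 ≤ q) (hn : 8 ≤ n)
    (hAB : Disjoint A B) {x y : Fin n × Fin n} (hx : x ∈ A ×ˢ B) (hy : y ∈ A ×ˢ B) (hxy : x ≠ y) :
    uniformProb (fun σ ↦ (IsTwinPair κ σ x.1 x.2 ∧ IsTwinPair κ σ y.1 y.2) ∧
      ShareColour κ σ x y) ≤
      (if x.1 = y.1 then q ^ (2 * r) else 0) + (if x.2 = y.2 then q ^ (2 * r) else 0) +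
        r ^ 2 * q ^ (2 * r + 1) := by
  rw [mem_product] at hx hy
  have hne : ∀ {a b}, a ∈ A → b ∈ B → a ≠ b := fun ha hb ↦ disjoint_iff_ne.1 hAB _ ha _ hb
  have herror : 0 ≤ r ^ 2 * q ^ (2 * r + 1) := by positivity
  by_cases h₁ : x.1 = y.1
  · have h₂ : x.2 ≠ y.2 := fun h₂ ↦ hxy (Prod.ext h₁ h₂)
    have hle := uniformProb_two_shape_eq_le hκ hq (by omega) (hne hx.1 hx.2) (hne hx.1 hy.2) h₂
    refine (uniformProb_mono fun σ hσ ↦ ?_).trans (hle.trans ?_)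
    · exact ⟨hσ.1.1.shape_eq.symm, h₁ ▸ hσ.1.2.shape_eq.symm⟩
    · simpa [h₁, h₂] using herror
  · by_cases h₂ : x.2 = y.2
    · have hle := uniformProb_two_shape_eq_le hκ hq (by omega) (hne hx.1 hx.2).symm
        (hne hy.1 hx.2).symm h₁
      refine (uniformProb_mono fun σ hσ ↦ ?_).trans (hle.trans ?_)
      · exact ⟨hσ.1.1.shape_eq, h₂ ▸ hσ.1.2.shape_eq⟩
      · simpa [h₁, h₂] using herror
    · have hdisj : Disjoint {x.2, y.2} ({x.1, y.1} : Finset (Fin n)) := by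
        simp [hne hx.1 hx.2, hne hx.1 hy.2, hne hy.1 hx.2, hne hy.1 hy.2]
      have hle := uniformProb_shareColour_and_shape_eq_le hκ hq hn h₁ h₂ hdisj
      refine (uniformProb_mono fun σ hσ ↦ ?_).trans (hle.trans_eq ?_)
      · exact ⟨hσ.2, hσ.1.1.shape_eq.symm, hσ.1.2.shape_eq.symm⟩
      · simp [h₁, h₂]

/-- The deletion method: remove one pair from every two twin pairs of `A ×ˢ B` sharing a colour. -/
theorem le_expect_twinNumber {q' : ℝ} {m : ℕ}
    (hκ : ∀ c, 2 * (#{x | κ x = c} : ℝ) ≤ q * (n * r))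
    (hκ' : ∀ x, q' * (n * r) + 1 ≤ #{y | κ y = κ x}) (hq : 0 ≤ q) (hq' : 0 ≤ q')
    (hqr : 2 * r ^ 2 * q ≤ 1) (hn : 8 ≤ n) (hm : 2 * m ≤ n) :
    m ^ 2 * (q' ^ r / 2) - (2 * m ^ 3 * q ^ (2 * r) + m ^ 4 * (r ^ 2 * q ^ (2 * r + 1))) ≤
      𝔼 σ, (twinNumber κ σ : ℝ) := by
  classical
  obtain ⟨A, -, hA⟩ := exists_subset_card_eq (s := (univ : Finset (Fin n))) (n := m)
    (by rw [card_fin]; omega)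
  obtain ⟨B, hBA, hB⟩ := exists_subset_card_eq (s := Aᶜ) (n := m)
    (by rw [card_compl, Fintype.card_fin]; omega)
  have hAB : Disjoint A B := disjoint_right.2 fun b hb ↦ mem_compl.1 (hBA hb)
  have hpairs : m ^ 2 * (q' ^ r / 2) ≤
      𝔼 σ, (#{x ∈ A ×ˢ B | IsTwinPair κ σ x.1 x.2} : ℝ) := by
    rw [expect_card_filter]
    refine le_trans (by simp [hA, hB, sq]) (card_nsmul_le_sum (A ×ˢ B) _ (q' ^ r / 2) fun x hx ↦ ?_)
    rw [mem_product] at hx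
    exact le_uniformProb_isTwinPair hκ hκ' hq hq' (by omega) hqr
      (disjoint_iff_ne.1 hAB _ hx.1 _ hx.2)
  have hconflicts : 𝔼 σ, (#{z ∈ (A ×ˢ B).offDiag |
      (IsTwinPair κ σ z.1.1 z.1.2 ∧ IsTwinPair κ σ z.2.1 z.2.2) ∧ ShareColour κ σ z.1 z.2} : ℝ) ≤
      2 * m ^ 3 * q ^ (2 * r) + m ^ 4 * (r ^ 2 * q ^ (2 * r + 1)) := by
    rw [expect_card_filter]
    refine (sum_le_sum fun z hz ↦ ?_).trans <|
      sum_offDiag_product_le hA hB (by positivity) (by positivity)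
    rw [mem_offDiag] at hz
    exact uniformProb_isTwinPair_shareColour_le hκ hq hn hAB hz.1 hz.2.1 hz.2.2
  have hdelete : 𝔼 σ, (#{x ∈ A ×ˢ B | IsTwinPair κ σ x.1 x.2} : ℝ) ≤
      (𝔼 σ, (twinNumber κ σ : ℝ)) + 𝔼 σ, (#{z ∈ (A ×ˢ B).offDiag |
        (IsTwinPair κ σ z.1.1 z.1.2 ∧ IsTwinPair κ σ z.2.1 z.2.2) ∧
          ShareColour κ σ z.1 z.2} : ℝ) := by
    rw [← expect_add_distrib]
    exact expect_le_expect fun σ _ ↦ mod_cast card_filter_isTwinPair_le κ σ (A ×ˢ B)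
  linarith

end FirstMoment

section Parameters

variable {r n : ℕ} {x q m : ℝ}

theorem exists_block_length (hr : 2 ≤ r) (hx : 64 ≤ x) :
    ∃ L : ℕ, 2 ≤ L ∧ 32 * (L : ℝ) ≤ x ^ (r - 1) ∧ x ^ (r - 1) ≤ 64 * L := by
  have hpow : x ≤ x ^ (r - 1) := le_self_pow₀ (by linarith) (by omega)
  have hfloor := Nat.floor_le (a := x ^ (r - 1) / 32) (by positivity)
  have hlt := Nat.lt_floor_add_one (x ^ (r - 1) / 32)
  have htwo : 2 ≤ ⌊x ^ (r - 1) / 32⌋₊ := Nat.le_floor (by push_cast; linarith)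
  have htwo' : (2 : ℝ) ≤ ⌊x ^ (r - 1) / 32⌋₊ := mod_cast htwo
  exact ⟨_, htwo, by linarith, by linarith⟩

theorem mul_mul_pow_le_one {u : ℝ} (hr : 2 ≤ r) (hx : 8 ≤ x) (hu : x ^ 2 * u ≤ 1) (hu₀ : 0 ≤ u)
    (hmx : 2 * m ≤ x ^ (r + 1)) : 16 * m * u ^ r ≤ 1 :=
  calc 16 * m * u ^ r ≤ x * x ^ (r + 1) * u ^ r := by
        gcongr ?_ * _
        nlinarith [pow_nonneg (by linarith : 0 ≤ x) (r + 1)]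
    _ = x ^ (r + 2) * u ^ r := by ring
    _ ≤ x ^ (2 * r) * u ^ r := by
        gcongr
        · linarith
        · omega
    _ = (x ^ 2 * u) ^ r := by rw [mul_pow, ← pow_mul]
    _ ≤ 1 := pow_le_one₀ (by positivity) hu

theorem sq_mul_sq_mul_pow_le_one {u : ℝ} (hr : 1 ≤ r) (hm : 0 ≤ m) (hu₀ : 0 ≤ u)
    (hu : r * (x ^ 2 * u) ≤ 1) (hmx : m ≤ x ^ (r + 1)) : m ^ 2 * r ^ 2 * u ^ (r + 1) ≤ 1 := by
  have hle : x ^ 2 * u ≤ 1 :=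
    (le_mul_of_one_le_left (by positivity) (mod_cast hr)).trans hu
  calc m ^ 2 * r ^ 2 * u ^ (r + 1) ≤ (x ^ (r + 1)) ^ 2 * r ^ 2 * u ^ (r + 1) := by gcongr
    _ = r ^ 2 * (x ^ 2 * u) ^ (r + 1) := by rw [mul_pow, ← pow_mul, ← pow_mul]; ring
    _ ≤ r ^ 2 * (x ^ 2 * u) ^ 2 := by
        gcongr ?_ * ?_
        exact pow_le_pow_of_le_one (by positivity) hle (by omega)
    _ = (r * (x ^ 2 * u)) ^ 2 := by ring
    _ ≤ 1 := pow_le_one₀ (by positivity) hu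

/-- Compared to a single twin pair, two twin pairs sharing a colour cost a further factor `q ^ r` if
they have a common edge and `q ^ (r + 1)` if not, against about `m` and `m ^ 2` choices. -/
theorem conflict_terms_le (hr : 2 ≤ r) (hx : 8 ≤ x) (hq : 0 ≤ q) (hqx : 8 * r * x ^ 2 * q ≤ 1)
    (hm : 0 ≤ m) (hmx : 2 * m ≤ x ^ (r + 1)) :
    2 * m ^ 3 * q ^ (2 * r) + m ^ 4 * (r ^ 2 * q ^ (2 * r + 1)) ≤
      m ^ 2 * ((q / 8) ^ r / 2) / 2 := by
  have hr₁ : (1 : ℝ) ≤ r := mod_cast one_le_two.trans hr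
  have hru : r * (x ^ 2 * (8 * q)) ≤ 1 := by linarith
  have hu : x ^ 2 * (8 * q) ≤ 1 := (le_mul_of_one_le_left (by positivity) hr₁).trans hru
  have hshared := mul_mul_pow_le_one hr hx hu (by positivity) hmx
  have hdisjoint := sq_mul_sq_mul_pow_le_one (m := m) (by omega) hm (by positivity) hru
    (by linarith)
  have hscale : q ^ r = (q / 8) ^ r * 8 ^ r := by rw [← mul_pow]; congr 1; ring
  calc 2 * m ^ 3 * q ^ (2 * r) + m ^ 4 * (r ^ 2 * q ^ (2 * r + 1))
    _ = m ^ 2 * q ^ r * (2 * m * q ^ r + m ^ 2 * r ^ 2 * q ^ (r + 1)) := by ring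
    _ = m ^ 2 * (q / 8) ^ r *
        ((16 * m * (8 * q) ^ r + m ^ 2 * r ^ 2 * (8 * q) ^ (r + 1)) / 8) := by
      rw [mul_pow 8 q r, mul_pow 8 q (r + 1)]
      linear_combination m ^ 2 * (2 * m * q ^ r + m ^ 2 * r ^ 2 * q ^ (r + 1)) * hscale
    _ ≤ m ^ 2 * (q / 8) ^ r * ((1 + 1) / 8) := by gcongr
    _ = m ^ 2 * ((q / 8) ^ r / 2) / 2 := by ring

theorem le_sq_mul_div_pow (hx : 0 < x) (hr : 0 < r) (hqx : 1 ≤ 16 * r * x ^ 2 * q)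
    (hmx : x ^ (r + 1) ≤ 3 * m) :
    x ^ 2 / (36 * (128 * r) ^ r) ≤ m ^ 2 * ((q / 8) ^ r / 2) / 2 := by
  have hr₀ : (0 : ℝ) < r := mod_cast hr
  have hq : 1 / (128 * r * x ^ 2) ≤ q / 8 := by
    rw [div_le_div_iff₀ (by positivity) (by norm_num)]
    linarith
  calc x ^ 2 / (36 * (128 * r) ^ r)
    _ = (x ^ (r + 1) / 3) ^ 2 * ((1 / (128 * r * x ^ 2)) ^ r / 2) / 2 := by
      rw [div_pow 1, one_pow, mul_pow _ (x ^ 2)]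
      field_simp
      ring
    _ ≤ m ^ 2 * ((q / 8) ^ r / 2) / 2 := by
      gcongr
      linarith

/-- A constant `c` for which most ordered `r`-matchings of size `n` contain twins of size at least
`c * n ^ (2 / (r + 1))`. -/
noncomputable def twinConstant (r : ℕ) : ℝ := 1 / (72 * (128 * r) ^ r)

theorem twinConstant_pos (hr : 0 < r) : 0 < twinConstant r := by
  have : (0 : ℝ) < r := mod_cast hr
  unfold twinConstant
  positivity

theorem collision_bounds {y L : ℝ} (hn : 0 < n) (hy : y * x ^ 2 = n) (hLy : 32 * L ≤ y)
    (hyL : y ≤ 64 * L) (hq : q * (n * r) = 4 * L) :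
    8 * r * x ^ 2 * q ≤ 1 ∧ 1 ≤ 16 * r * x ^ 2 * q := by
  have hn₀ : (0 : ℝ) < n := mod_cast hn
  constructor <;> refine le_of_mul_le_mul_right ?_ hn₀
  · calc 8 * r * x ^ 2 * q * n = 32 * L * x ^ 2 := by linear_combination 8 * x ^ 2 * hq
      _ ≤ y * x ^ 2 := by gcongr
      _ = 1 * n := by rw [hy, one_mul]
  · calc 1 * (n : ℝ) = y * x ^ 2 := by rw [hy, one_mul]
      _ ≤ 64 * L * x ^ 2 := by gcongr
      _ = 16 * r * x ^ 2 * q * n := by linear_combination -16 * x ^ 2 * hq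

/-- With blocks of about `n ^ ((r - 1) / (r + 1))` vertices two vertices have the same colour with
probability about `q`, which is of order `n ^ (-2 / (r + 1))`. -/
theorem exists_vertex_colouring_of_pow_eq (hr : 2 ≤ r) (hx : 64 ≤ x) (hxn : x ^ (r + 1) = n) :
    ∃ (κ : Fin n × Fin r → ℕ) (q : ℝ), (∀ v w, vertex v ≤ vertex w → κ v ≤ κ w) ∧ 0 ≤ q ∧
      (∀ c, 2 * (#{v | κ v = c} : ℝ) ≤ q * (n * r)) ∧
      (∀ v, q / 8 * (n * r) + 1 ≤ #{w | κ w = κ v}) ∧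
      8 * r * x ^ 2 * q ≤ 1 ∧ 1 ≤ 16 * r * x ^ 2 * q := by
  obtain ⟨L, hL, hLx, hxL⟩ := exists_block_length hr hx
  have hfactor : x ^ (r - 1) * x ^ 2 = n := by rw [← pow_add, ← hxn]; congr 1; omega
  have hxle : x ^ (r - 1) ≤ n :=
    hfactor ▸ le_mul_of_one_le_right (by positivity) (one_le_pow₀ (by linarith))
  have hLn : 32 * L ≤ n := mod_cast hLx.trans hxle
  obtain ⟨κ, hmono, hlower, hupper⟩ := exists_vertex_colouring (n := n) (r := r) (L := L)
    (by omega) ((by omega : L ≤ n).trans (Nat.le_mul_of_pos_right n (by omega)))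
  have hn₀ : (0 : ℝ) < n := mod_cast (by omega : 0 < n)
  have hqn : (4 * L / (n * r) : ℝ) * (n * r) = 4 * L := div_mul_cancel₀ _ (by positivity)
  refine ⟨κ, 4 * L / (n * r), hmono, by positivity, fun c ↦ ?_, fun v ↦ ?_,
    collision_bounds (by omega) hfactor hLx hxL hqn⟩
  · have hc : (#{w | κ w = c} : ℝ) ≤ 2 * L := mod_cast hupper c
    linarith
  · have hL₂ : (2 : ℝ) ≤ L := mod_cast hL
    have hv : (L : ℝ) ≤ #{w | κ w = κ v} := mod_cast hlower v
    linarith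

theorem exists_le_expect_twinNumber (hr : 2 ≤ r) (hx : 64 ≤ x) (hrx : r ≤ x)
    (hxn : x ^ (r + 1) = n) :
    ∃ κ : Fin n × Fin r → ℕ, (∀ v w, vertex v ≤ vertex w → κ v ≤ κ w) ∧
      2 * (twinConstant r * x ^ 2) ≤ 𝔼 σ, (twinNumber κ σ : ℝ) := by
  obtain ⟨κ, q, hmono, hq₀, hupper, hlower, hq_le, hle_q⟩ :=
    exists_vertex_colouring_of_pow_eq hr hx hxn
  have hn : 64 ≤ n := by
    have : x ≤ n := hxn ▸ le_self_pow₀ (by linarith) (by omega)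
    exact_mod_cast hx.trans this
  have hqr : 2 * r ^ 2 * q ≤ 1 :=
    calc 2 * r ^ 2 * q = 2 * r * r * q := by ring
      _ ≤ 8 * r * x ^ 2 * q := by gcongr <;> nlinarith
      _ ≤ 1 := hq_le
  have hmean := le_expect_twinNumber (m := n / 2) hupper hlower hq₀ (by positivity) hqr
    (by omega) (by omega)
  have hmain := le_sq_mul_div_pow (m := (n / 2 : ℕ)) (by linarith) (by omega) hle_q
    (hxn.trans_le (mod_cast (by omega)))
  have herror := conflict_terms_le (m := (n / 2 : ℕ)) hr (by linarith) hq₀ hq_le (by positivity)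
    (hxn ▸ mod_cast (by omega))
  refine ⟨κ, hmono, ?_⟩
  calc 2 * (twinConstant r * x ^ 2) = x ^ 2 / (36 * (128 * r) ^ r) := by
        rw [twinConstant]; ring
    _ ≤ 𝔼 σ, (twinNumber κ σ : ℝ) := by linarith

theorem le_uniformProb_hasTwins (hr : 2 ≤ r) (hx : 64 ≤ x) (hrx : r ≤ x)
    (hxn : x ^ (r + 1) = n) :
    1 - 16 * r / (twinConstant r * x ^ 2) ≤ uniformProb fun σ : Perm (Fin n × Fin r) ↦
      ∃ k : ℕ, twinConstant r * x ^ 2 ≤ k ∧ HasTwins (matchingOf σ) k := by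
  obtain ⟨κ, hmono, hmean⟩ := exists_le_expect_twinNumber hr hx hrx hxn
  set c := twinConstant r * x ^ 2
  have hc : 0 < c := mul_pos (twinConstant_pos (by omega)) (by positivity)
  have hchebyshev := uniformProb_lt_half_le (by positivity) (by positivity) hmean
    (uniformVariance_twinNumber_le (by omega) κ)
  have htwins : ∀ σ, ¬ (twinNumber κ σ : ℝ) < 2 * c / 2 →
      ∃ k : ℕ, c ≤ k ∧ HasTwins (matchingOf σ) k := fun σ hσ ↦
    ⟨twinNumber κ σ, by linarith, hasTwins_twinNumber (by omega) hmono σ⟩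
  have hadd := uniformProb_and_add_uniformProb_and_not (fun _ : Perm (Fin n × Fin r) ↦ True)
    fun σ ↦ (twinNumber κ σ : ℝ) < 2 * c / 2
  simp only [true_and, uniformProb_of_forall fun _ ↦ trivial] at hadd
  calc 1 - 16 * r / c = 1 - 4 * (8 * r) / (2 * c) := by rw [mul_div_mul_comm]; ring
    _ ≤ uniformProb fun σ ↦ ¬ (twinNumber κ σ : ℝ) < 2 * c / 2 := by linarith
    _ ≤ _ := uniformProb_mono htwins

end Parameters

section Limit

theorem tendsto_one_of_tendsto_atTop {ι : Type*} {l : Filter ι} {p y : ι → ℝ} (c : ℝ)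
    (hy : Filter.Tendsto y l Filter.atTop) (hlower : ∀ᶠ i in l, 1 - c / y i ≤ p i)
    (hupper : ∀ i, p i ≤ 1) : Filter.Tendsto p l (nhds 1) := by
  have hlim : Filter.Tendsto (fun i ↦ 1 - c / y i) l (nhds 1) := by
    simpa using (hy.const_div_atTop c).const_sub 1
  exact tendsto_of_tendsto_of_tendsto_of_le_of_le' hlim tendsto_const_nhds hlower
    (Filter.Eventually.of_forall hupper)

end Limit

/-- lower bound in Theorem 1.1, `thm:random`.
For every `r ≥ 2` there is `c = c(r) > 0` such that the proportion of ordered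
`r`-matchings of size `n` containing twins of size at least `c · n^{2/(r+1)}`
tends to `1`. -/
theorem random_lower_bound (r : ℕ) (hr : 2 ≤ r) :
    ∃ c : ℝ, 0 < c ∧ Filter.Tendsto (fun n : ℕ =>
      (Nat.card {M : Finset (Finset ℕ) | IsOrderedMatching r n M ∧
          ∃ k : ℕ, c * (n : ℝ) ^ ((2 : ℝ) / ((r : ℝ) + 1)) ≤ (k : ℝ) ∧ HasTwins M k} : ℝ) /
        (Nat.card {M : Finset (Finset ℕ) | IsOrderedMatching r n M} : ℝ))
      Filter.atTop (nhds 1) := by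
  let x (n : ℕ) : ℝ := (n : ℝ) ^ (1 / ((r : ℝ) + 1))
  have hpow : ∀ (n k : ℕ), x n ^ k = (n : ℝ) ^ ((k : ℝ) / ((r : ℝ) + 1)) := fun n k ↦ by
    rw [← Real.rpow_mul_natCast n.cast_nonneg, one_div_mul_eq_div]
  have hsucc : ∀ n, x n ^ (r + 1) = n := fun n ↦ by
    rw [hpow, Nat.cast_add_one, div_self (by positivity), Real.rpow_one]
  have hsq : ∀ n : ℕ, (n : ℝ) ^ ((2 : ℝ) / ((r : ℝ) + 1)) = x n ^ 2 := fun n ↦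
    mod_cast (hpow n 2).symm
  have hx : Filter.Tendsto x Filter.atTop Filter.atTop :=
    (tendsto_rpow_atTop (by positivity)).comp tendsto_natCast_atTop_atTop
  have hc := twinConstant_pos (by omega : 0 < r)
  refine ⟨twinConstant r, hc, ?_⟩
  simp only [hsq, ← uniformProb_matchingOf (by omega : 0 < r)]
  refine tendsto_one_of_tendsto_atTop (16 * r)
    (((Filter.tendsto_pow_atTop two_ne_zero).comp hx).const_mul_atTop hc) ?_
    fun n ↦ uniformProb_le_one _
  filter_upwards [hx.eventually_ge_atTop 64, hx.eventually_ge_atTop (r : ℝ)] with n hn hrn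
  exact le_uniformProb_hasTwins hr hn hrn (hsucc n)
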